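/- arXiv:math/0206135 — 16 statements merged into one kernel-verified Lean document; each statement's English description precedes it below -/
import Mathlib

section
/- The quotient of the complex projective plane by complex conjugation is the 4-sphere: the quotient topological space of ℙ(ℂ³) (the projectivization of ℂ³, i.e. nonzero vectors z ∈ ℂ³ modulo nonzero complex scalars) by the equivalence relation identifying the class of z with the class of its entrywise complex conjugate conj(z) is homeomorphic to the unit sphere in ℝ⁵ (the 4-dimensional sphere S⁴). -/
/-!
For a nonzero `z = x + i y` in `ℂ³`, the real part of the Hermitian projection `z z* / |z|²` is the
real symmetric matrix `(x xᵀ + y yᵀ) / |z|²`: positive semidefinite, of trace one and rank at most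
two. It depends only on the class of `z` in `ℙ(ℂ³)` and is unchanged by conjugation. Conversely:

* every singular positive semidefinite matrix of trace one arises so, by the spectral theorem
  (`exists_reProj_eq`);
* the matrix determines `z` up to a scalar and conjugation (`eq_smul_or_eq_smul_conj`): it is the
  Gram matrix of the coordinates of `z` as vectors of the plane `ℂ = ℝ²`, which determines them up
  to `O(2)`, the group generated by unit scalars and conjugation.

Thus the quotient, being compact, is homeomorphic to the set of singular matrices in the
five-dimensional compact convex body of positive semidefinite real symmetric `3 × 3` matrices of
trace one. This set is the boundary of the body (`mem_frontier_psdBody`), hence a 4-sphere by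
radial rescaling.
-/

/-- The projectivization `ℙ(ℂ³)` of `ℂ³ = Fin 3 → ℂ`. -/
abbrev CP2 : Type := Projectivization ℂ (Fin 3 → ℂ)

/-- The quotient topology on `ℙ(ℂ³)`, induced from `ℂ³ \ {0}`. -/
noncomputable instance : TopologicalSpace CP2 :=
  inferInstanceAs (TopologicalSpace (Quotient (projectivizationSetoid ℂ (Fin 3 → ℂ))))

/-- The relation on `ℙ(ℂ³)` identifying the class of `z` with the class of its
entrywise complex conjugate. -/
def conjRel (a b : CP2) : Prop :=
  ∃ (z : Fin 3 → ℂ) (hz : z ≠ 0) (hz' : (fun i => starRingEnd ℂ (z i)) ≠ 0),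
    a = Projectivization.mk ℂ z hz ∧
      b = Projectivization.mk ℂ (fun i => starRingEnd ℂ (z i)) hz'

/-! ### The spectrahedron and its boundary -/

/-- The quadratic form on `ℝ³` of the symmetric trace-one matrix with coordinates `v`: the first
two diagonal entries are `v 0` and `v 1` (the third is `1 - v 0 - v 1`), and the entries at
`(0,1)`, `(0,2)`, `(1,2)` are `v 2`, `v 3`, `v 4`. -/
def traceOneForm (v : EuclideanSpace ℝ (Fin 5)) (x : Fin 3 → ℝ) : ℝ :=
  v 0 * x 0 ^ 2 + v 1 * x 1 ^ 2 + (1 - v 0 - v 1) * x 2 ^ 2 +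
    2 * v 2 * (x 0 * x 1) + 2 * v 3 * (x 0 * x 2) + 2 * v 4 * (x 1 * x 2)

/-- The spectrahedron of positive semidefinite symmetric real `3 × 3` matrices of trace one, in
the coordinates of `traceOneForm`. -/
def psdBody : Set (EuclideanSpace ℝ (Fin 5)) := {v | ∀ x, 0 ≤ traceOneForm v x}

lemma continuous_traceOneForm :
    Continuous fun p : EuclideanSpace ℝ (Fin 5) × (Fin 3 → ℝ) => traceOneForm p.1 p.2 := by
  unfold traceOneForm
  fun_prop

lemma traceOneForm_smul (v : EuclideanSpace ℝ (Fin 5)) (t : ℝ) (x : Fin 3 → ℝ) :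
    traceOneForm v (t • x) = t ^ 2 * traceOneForm v x := by
  simp only [traceOneForm, Pi.smul_apply, smul_eq_mul]
  ring

lemma isClosed_psdBody : IsClosed psdBody := by
  have : psdBody = ⋂ x, {v | 0 ≤ traceOneForm v x} := by
    ext v
    simp [psdBody]
  rw [this]
  refine isClosed_iInter fun x => isClosed_le continuous_const ?_
  exact continuous_traceOneForm.comp (by fun_prop : Continuous fun v => (v, x))

lemma convex_psdBody : Convex ℝ psdBody := by
  intro v hv w hw a b ha hb hab x
  have h : traceOneForm (a • v + b • w) x = a * traceOneForm v x + b * traceOneForm w x := by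
    obtain rfl : b = 1 - a := by linarith
    simp only [traceOneForm, PiLp.add_apply, PiLp.smul_apply, smul_eq_mul]
    ring
  rw [h]
  exact add_nonneg (mul_nonneg ha (hv x)) (mul_nonneg hb (hw x))

/-- Diagonal entries are nonnegative with sum one, and testing a form on `eᵢ ± eⱼ` bounds its
off-diagonal entries. -/
lemma isBounded_psdBody : Bornology.IsBounded psdBody := by
  refine (Metric.isBounded_iff_subset_closedBall 0).2 ⟨3, fun v hv => ?_⟩
  have e0 := hv ![1, 0, 0]
  have e1 := hv ![0, 1, 0]
  have e2 := hv ![0, 0, 1]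
  have p01 := hv ![1, 1, 0]
  have m01 := hv ![1, -1, 0]
  have p02 := hv ![1, 0, 1]
  have m02 := hv ![1, 0, -1]
  have p12 := hv ![0, 1, 1]
  have m12 := hv ![0, 1, -1]
  simp [traceOneForm] at e0 e1 e2 p01 m01 p02 m02 p12 m12
  rw [mem_closedBall_zero_iff, EuclideanSpace.norm_eq]
  refine Real.sqrt_le_iff.2 ⟨by norm_num, ?_⟩
  simp only [Fin.sum_univ_five, Real.norm_eq_abs, sq_abs]
  have b0 : v 0 ^ 2 ≤ 1 := (sq_le_one_iff_abs_le_one _).2 (abs_le.2 ⟨by linarith, by linarith⟩)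
  have b1 : v 1 ^ 2 ≤ 1 := (sq_le_one_iff_abs_le_one _).2 (abs_le.2 ⟨by linarith, by linarith⟩)
  have b2 : v 2 ^ 2 ≤ 1 := (sq_le_one_iff_abs_le_one _).2 (abs_le.2 ⟨by linarith, by linarith⟩)
  have b3 : v 3 ^ 2 ≤ 1 := (sq_le_one_iff_abs_le_one _).2 (abs_le.2 ⟨by linarith, by linarith⟩)
  have b4 : v 4 ^ 2 ≤ 1 := (sq_le_one_iff_abs_le_one _).2 (abs_le.2 ⟨by linarith, by linarith⟩)
  linarith

/-- A positive definite form is interior: positivity on the compact unit sphere of `ℝ³` persists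
under small perturbations. -/
lemma mem_interior_psdBody {v : EuclideanSpace ℝ (Fin 5)}
    (hv : ∀ x, x ≠ 0 → 0 < traceOneForm v x) : v ∈ interior psdBody := by
  rw [mem_interior_iff_mem_nhds]
  have key : ∀ᶠ w in nhds v, ∀ x ∈ Metric.sphere (0 : Fin 3 → ℝ) 1, 0 < traceOneForm w x := by
    refine (isCompact_sphere (0 : Fin 3 → ℝ) 1).eventually_forall_of_forall_eventually
      fun x hx => ?_
    refine continuous_traceOneForm.continuousAt.eventually (lt_mem_nhds (hv x ?_))
    exact ne_zero_of_mem_unit_sphere ⟨x, hx⟩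
  filter_upwards [key] with w hw x
  rcases eq_or_ne x 0 with rfl | hx
  · simp [traceOneForm]
  · have hn : ‖x‖ ≠ 0 := norm_ne_zero_iff.2 hx
    have h : x = ‖x‖ • (‖x‖⁻¹ • x) := by rw [smul_smul, mul_inv_cancel₀ hn, one_smul]
    rw [h, traceOneForm_smul]
    exact mul_nonneg (sq_nonneg _) (hw _ (by simp [norm_smul, hn])).le

/-- The coordinates of `I / 3`. -/
noncomputable def psdCenter : EuclideanSpace ℝ (Fin 5) := !₂[1 / 3, 1 / 3, 0, 0, 0]

lemma traceOneForm_psdCenter (x : Fin 3 → ℝ) :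
    traceOneForm psdCenter x = (x 0 ^ 2 + x 1 ^ 2 + x 2 ^ 2) / 3 := by
  simp [traceOneForm, psdCenter]
  ring

lemma sum_sq_pos {x : Fin 3 → ℝ} (hx : x ≠ 0) : 0 < x 0 ^ 2 + x 1 ^ 2 + x 2 ^ 2 := by
  obtain ⟨i, hi⟩ := Function.ne_iff.1 hx
  have hi' : 0 < x i ^ 2 := by
    have : x i ≠ 0 := hi
    positivity
  fin_cases i <;> simp at hi' <;> positivity

lemma interior_psdBody_nonempty : (interior psdBody).Nonempty :=
  ⟨psdCenter, mem_interior_psdBody fun x hx => by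
    rw [traceOneForm_psdCenter]
    have := sum_sq_pos hx
    positivity⟩

/-- The boundary of the spectrahedron consists of the singular matrices in it. -/
lemma mem_frontier_psdBody {v : EuclideanSpace ℝ (Fin 5)} :
    v ∈ frontier psdBody ↔ v ∈ psdBody ∧ ∃ u, u ≠ 0 ∧ traceOneForm v u = 0 := by
  rw [isClosed_psdBody.frontier_eq]
  refine and_congr_right fun hv => ⟨fun h => ?_, ?_⟩
  · contrapose! h
    exact mem_interior_psdBody fun x hx => lt_of_le_of_ne (hv x) (Ne.symm (h x hx))
  · rintro ⟨u, hu, h0⟩ hint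
    -- Moving from `v` away from `I / 3` makes the form negative at the null vector `u`.
    have hc : Filter.Tendsto (fun t : ℝ => v + t • (v - psdCenter)) (nhds 0) (nhds v) := by
      have : Continuous fun t : ℝ => v + t • (v - psdCenter) := by fun_prop
      simpa using this.tendsto 0
    have hev := hc.eventually (mem_interior_iff_mem_nhds.1 hint)
    obtain ⟨ε, hε, hball⟩ := Metric.eventually_nhds_iff.1 hev
    have h := hball (y := ε / 2)
      (by rw [Real.dist_eq, sub_zero, abs_of_pos (by positivity)]; linarith) u
    have e : traceOneForm (v + (ε / 2) • (v - psdCenter)) u =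
        (1 + ε / 2) * traceOneForm v u - ε / 2 * traceOneForm psdCenter u := by
      simp only [traceOneForm, PiLp.add_apply, PiLp.smul_apply, PiLp.sub_apply, smul_eq_mul]
      ring
    rw [e, h0, traceOneForm_psdCenter] at h
    have := mul_pos hε (sum_sq_pos hu)
    linarith

/-! ### Real parts of rank-one projections -/

/-- The squared Hermitian norm on `ℂ³`. -/
def hermSq (z : Fin 3 → ℂ) : ℝ :=
  Complex.normSq (z 0) + Complex.normSq (z 1) + Complex.normSq (z 2)

lemma hermSq_pos {z : Fin 3 → ℂ} (hz : z ≠ 0) : 0 < hermSq z := by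
  obtain ⟨i, hi⟩ := Function.ne_iff.1 hz
  have hi' : 0 < Complex.normSq (z i) := Complex.normSq_pos.2 hi
  have h : hermSq z = ∑ j, Complex.normSq (z j) := by
    rw [Fin.sum_univ_three, hermSq]
  rw [h]
  exact Finset.sum_pos' (fun j _ => Complex.normSq_nonneg _) ⟨i, Finset.mem_univ i, hi'⟩

/-- The coordinates of `Re (z z*) / |z|²`, the real part of the orthogonal projection onto the
complex line through `z`. -/
noncomputable def reProj (z : Fin 3 → ℂ) : EuclideanSpace ℝ (Fin 5) :=
  !₂[Complex.normSq (z 0) / hermSq z, Complex.normSq (z 1) / hermSq z,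
    (z 0 * starRingEnd ℂ (z 1)).re / hermSq z, (z 0 * starRingEnd ℂ (z 2)).re / hermSq z,
    (z 1 * starRingEnd ℂ (z 2)).re / hermSq z]

lemma reProj_smul (t : ℂ) (ht : t ≠ 0) (z : Fin 3 → ℂ) : reProj (t • z) = reProj z := by
  have hn : Complex.normSq t ≠ 0 := by simpa using ht
  have h1 : hermSq (t • z) = Complex.normSq t * hermSq z := by
    simp [hermSq]
    ring
  have h2 : ∀ a b : ℂ, (t * a * starRingEnd ℂ (t * b)).re =
      Complex.normSq t * (a * starRingEnd ℂ b).re := by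
    intro a b
    simp [Complex.normSq_apply]
    ring
  unfold reProj
  rw [h1]
  simp only [Pi.smul_apply, smul_eq_mul, h2, Complex.normSq_mul, mul_div_mul_left _ _ hn]

lemma reProj_conj (z : Fin 3 → ℂ) : reProj (fun i => starRingEnd ℂ (z i)) = reProj z := by
  simp [reProj, hermSq]

lemma traceOneForm_reProj {z : Fin 3 → ℂ} (hz : z ≠ 0) (x : Fin 3 → ℝ) :
    traceOneForm (reProj z) x =
      Complex.normSq (x 0 * z 0 + x 1 * z 1 + x 2 * z 2) / hermSq z := by
  have h := (hermSq_pos hz).ne'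
  simp only [traceOneForm, reProj]
  simp
  field_simp
  simp [Complex.normSq_apply, hermSq]
  ring

/-- Three vectors of the real plane `ℂ` are linearly dependent over `ℝ`. -/
lemma exists_real_relation (z : Fin 3 → ℂ) :
    ∃ u : Fin 3 → ℝ, u ≠ 0 ∧ (u 0 * z 0 + u 1 * z 1 + u 2 * z 2 : ℂ) = 0 := by
  have h : LinearMap.ker (Fintype.linearCombination ℝ z) ≠ ⊥ :=
    LinearMap.ker_ne_bot_of_finrank_lt (by simp [Complex.finrank_real_complex])
  obtain ⟨u, hu, hu0⟩ := (Submodule.ne_bot_iff _).1 h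
  refine ⟨u, hu0, ?_⟩
  simpa [Fintype.linearCombination_apply, Fin.sum_univ_three] using hu

lemma reProj_mem_frontier {z : Fin 3 → ℂ} (hz : z ≠ 0) : reProj z ∈ frontier psdBody := by
  refine mem_frontier_psdBody.2 ⟨fun x => ?_, ?_⟩
  · rw [traceOneForm_reProj hz]
    exact div_nonneg (Complex.normSq_nonneg _) (hermSq_pos hz).le
  · obtain ⟨u, hu, h⟩ := exists_real_relation z
    exact ⟨u, hu, by rw [traceOneForm_reProj hz, h]; simp⟩

/-! ### Surjectivity onto the singular matrices -/

/-- A singular positive semidefinite real `3 × 3` matrix is `x xᵀ + y yᵀ`, the real part of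
`z z*` with `z = x + i y`. -/
lemma exists_re_eq_of_posSemidef {M : Matrix (Fin 3) (Fin 3) ℝ} (hM : M.PosSemidef)
    (hdet : M.det = 0) :
    ∃ z : Fin 3 → ℂ, ∀ i j, (z i * starRingEnd ℂ (z j)).re = M i j := by
  have hspec : ∀ i j, M i j = ∑ k, hM.1.eigenvalues k *
      ((hM.1.eigenvectorUnitary : Matrix (Fin 3) (Fin 3) ℝ) i k *
        (hM.1.eigenvectorUnitary : Matrix (Fin 3) (Fin 3) ℝ) j k) := by
    intro i j
    conv_lhs => rw [hM.1.spectral_theorem]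
    simp [Unitary.conjStarAlgAut_apply, Matrix.mul_apply, Matrix.diagonal_apply,
      Matrix.star_apply, Fin.sum_univ_three]
    ring
  have hnn := hM.eigenvalues_nonneg
  have h0 : ∃ k, hM.1.eigenvalues k = 0 := by
    have := hM.1.det_eq_prod_eigenvalues
    rw [hdet] at this
    simpa [Finset.prod_eq_zero_iff] using this.symm
  generalize hM.1.eigenvalues = l at *
  generalize (hM.1.eigenvectorUnitary : Matrix (Fin 3) (Fin 3) ℝ) = U at *
  obtain ⟨k, hk⟩ := h0
  -- `p` and `q` are the two indices other than `k`.
  have two : ∀ p q : Fin 3, (∀ i j, M i j = l p * (U i p * U j p) + l q * (U i q * U j q)) →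
      ∃ z : Fin 3 → ℂ, ∀ i j, (z i * starRingEnd ℂ (z j)).re = M i j := by
    intro p q h
    refine ⟨fun i => ⟨√(l p) * U i p, √(l q) * U i q⟩, fun i j => ?_⟩
    rw [h]
    simp only [Complex.mul_re, Complex.conj_re, Complex.conj_im]
    linear_combination (U i p * U j p) * Real.mul_self_sqrt (hnn p) +
      (U i q * U j q) * Real.mul_self_sqrt (hnn q)
  fin_cases k
  · exact two 1 2 fun i j => by
      rw [hspec, Fin.sum_univ_three, show l 0 = 0 from hk]; ring
  · exact two 0 2 fun i j => by
      rw [hspec, Fin.sum_univ_three, show l 1 = 0 from hk]; ring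
  · exact two 0 1 fun i j => by
      rw [hspec, Fin.sum_univ_three, show l 2 = 0 from hk]; ring

lemma exists_reProj_eq {v : EuclideanSpace ℝ (Fin 5)} (hv : v ∈ frontier psdBody) :
    ∃ z, z ≠ 0 ∧ reProj z = v := by
  obtain ⟨hpos, u, hu, hu0⟩ := mem_frontier_psdBody.1 hv
  let M : Matrix (Fin 3) (Fin 3) ℝ :=
    !![v 0, v 2, v 3; v 2, v 1, v 4; v 3, v 4, 1 - v 0 - v 1]
  have hform : ∀ x : Fin 3 → ℝ, star x ⬝ᵥ (M.mulVec x) = traceOneForm v x := by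
    intro x
    simp [M, Matrix.mulVec, dotProduct, Fin.sum_univ_three, traceOneForm]
    ring
  have hM : M.PosSemidef := by
    refine .of_dotProduct_mulVec_nonneg ?_ fun x => ?_
    · ext i j
      fin_cases i <;> fin_cases j <;> simp [M]
    · rw [hform]
      exact hpos x
  have hdet : M.det = 0 := by
    refine Matrix.exists_mulVec_eq_zero_iff.1 ⟨u, hu, ?_⟩
    exact (hM.dotProduct_mulVec_zero_iff u).1 ((hform u).trans hu0)
  obtain ⟨z, h⟩ := exists_re_eq_of_posSemidef hM hdet
  have h00 : Complex.normSq (z 0) = v 0 := by simpa [M, Complex.mul_conj] using h 0 0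
  have h11 : Complex.normSq (z 1) = v 1 := by simpa [M, Complex.mul_conj] using h 1 1
  have h22 : Complex.normSq (z 2) = 1 - v 0 - v 1 := by simpa [M, Complex.mul_conj] using h 2 2
  have h01 : (z 0 * starRingEnd ℂ (z 1)).re = v 2 := h 0 1
  have h02 : (z 0 * starRingEnd ℂ (z 2)).re = v 3 := h 0 2
  have h12 : (z 1 * starRingEnd ℂ (z 2)).re = v 4 := h 1 2
  have hN : hermSq z = 1 := by
    unfold hermSq
    linarith
  refine ⟨z, ?_, ?_⟩
  · rintro rfl
    simp [hermSq] at hN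
  · ext i
    simp only [reProj, hN, h00, h11, h01, h02, h12, div_one]
    fin_cases i <;> rfl

/-! ### Injectivity up to conjugation -/

/-- A nonzero `w` whose real Gram matrix is `c` times that of `z` is a scalar multiple of `z` or of
its conjugate. For `k` with `w k ≠ 0`, the vectors `conj (w k) • w` and `(c * conj (z k)) • z` have
equal real parts, and then their imaginary parts have equal outer products, so agree up to one
global sign. -/
lemma eq_smul_or_eq_smul_conj {z w : Fin 3 → ℂ} {c : ℝ} (hw : w ≠ 0)
    (h : ∀ i j, (w i * starRingEnd ℂ (w j)).re = c * (z i * starRingEnd ℂ (z j)).re) :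
    ∃ s : ℂ, w = s • z ∨ w = s • fun i => starRingEnd ℂ (z i) := by
  obtain ⟨k, hk⟩ := Function.ne_iff.1 hw
  have hk' : starRingEnd ℂ (w k) ≠ 0 := by simpa using hk
  have him : ∀ i j, (w i * starRingEnd ℂ (w k)).im * (w j * starRingEnd ℂ (w k)).im =
      (c * (z i * starRingEnd ℂ (z k)).im) * (c * (z j * starRingEnd ℂ (z k)).im) := by
    intro i j
    have e : ∀ a b d : ℂ, (a * starRingEnd ℂ d).im * (b * starRingEnd ℂ d).im =
        (d * starRingEnd ℂ d).re * (a * starRingEnd ℂ b).re -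
          (a * starRingEnd ℂ d).re * (b * starRingEnd ℂ d).re := by
      intro a b d
      simp
      ring
    rw [e, h, h, h, h]
    linear_combination -c ^ 2 * e (z i) (z j) (z k)
  set p : Fin 3 → ℝ := fun i => (w i * starRingEnd ℂ (w k)).im with hp
  set q : Fin 3 → ℝ := fun i => c * (z i * starRingEnd ℂ (z k)).im with hq
  have him' : ∀ i j, p i * p j = q i * q j := him
  have hsign : (∀ i, p i = q i) ∨ (∀ i, p i = -q i) := by
    by_cases hp0 : ∃ m, p m ≠ 0
    · obtain ⟨m, hm⟩ := hp0
      rcases mul_self_eq_mul_self_iff.1 (him' m m) with hs | hs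
      · refine Or.inl fun i => mul_right_cancel₀ hm ?_
        rw [him' i m, hs]
      · refine Or.inr fun i => mul_right_cancel₀ hm ?_
        rw [him' i m, hs]
        ring
    · push Not at hp0
      refine Or.inl fun i => ?_
      have := him' i i
      rw [hp0 i] at this ⊢
      exact (mul_self_eq_zero.1 (by linarith)).symm
  rcases hsign with hs | hs
  · refine ⟨c * starRingEnd ℂ (z k) / starRingEnd ℂ (w k), Or.inl (funext fun i => ?_)⟩
    have : w i * starRingEnd ℂ (w k) = c * (z i * starRingEnd ℂ (z k)) :=
      Complex.ext (by rw [h, Complex.re_ofReal_mul]) (by rw [Complex.im_ofReal_mul]; exact hs i)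
    rw [Pi.smul_apply, smul_eq_mul, div_mul_eq_mul_div, eq_div_iff hk', this]
    ring
  · refine ⟨c * z k / starRingEnd ℂ (w k), Or.inr (funext fun i => ?_)⟩
    have : w i * starRingEnd ℂ (w k) = c * starRingEnd ℂ (z i * starRingEnd ℂ (z k)) :=
      Complex.ext (by rw [h, Complex.re_ofReal_mul, Complex.conj_re])
        (by rw [Complex.im_ofReal_mul, Complex.conj_im]; exact (hs i).trans (neg_mul_eq_mul_neg _ _))
    rw [Pi.smul_apply, smul_eq_mul, div_mul_eq_mul_div, eq_div_iff hk', this]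
    simp
    ring

lemma gram_of_reProj_eq {z w : Fin 3 → ℂ} (hz : z ≠ 0) (hw : w ≠ 0)
    (h : reProj z = reProj w) (i j : Fin 3) :
    (w i * starRingEnd ℂ (w j)).re =
      hermSq w / hermSq z * (z i * starRingEnd ℂ (z j)).re := by
  have hz' := (hermSq_pos hz).ne'
  have hw' := (hermSq_pos hw).ne'
  have e : ∀ {a b : ℝ}, a / hermSq z = b / hermSq w → b = hermSq w / hermSq z * a := by
    intro a b hab
    field_simp at hab ⊢
    linarith
  have h0 := e (congrArg (fun v => v 0) h)
  have h1 := e (congrArg (fun v => v 1) h)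
  have h01 := e (congrArg (fun v => v 2) h)
  have h02 := e (congrArg (fun v => v 3) h)
  have h12 := e (congrArg (fun v => v 4) h)
  have h2 : Complex.normSq (w 2) = hermSq w / hermSq z * Complex.normSq (z 2) := by
    have a : hermSq w / hermSq z * hermSq z = hermSq w := div_mul_cancel₀ _ hz'
    have bz : Complex.normSq (z 2) =
        hermSq z - Complex.normSq (z 0) - Complex.normSq (z 1) := by unfold hermSq; ring
    have bw : Complex.normSq (w 2) =
        hermSq w - Complex.normSq (w 0) - Complex.normSq (w 1) := by unfold hermSq; ring
    rw [bz, bw]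
    linear_combination -a - h0 - h1
  have sw : ∀ a b : ℂ, (a * starRingEnd ℂ b).re = (b * starRingEnd ℂ a).re := by
    intro a b
    simp
    ring
  have dg : ∀ a : ℂ, (a * starRingEnd ℂ a).re = Complex.normSq a := by
    intro a
    simp [Complex.mul_conj]
  fin_cases i <;> fin_cases j
  · exact (dg _).trans (h0.trans (by rw [← dg]; rfl))
  · exact h01
  · exact h02
  · exact (sw _ _).trans (h01.trans (by rw [sw]; rfl))
  · exact (dg _).trans (h1.trans (by rw [← dg]; rfl))
  · exact h12
  · exact (sw _ _).trans (h02.trans (by rw [sw]; rfl))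
  · exact (sw _ _).trans (h12.trans (by rw [sw]; rfl))
  · exact (dg _).trans (h2.trans (by rw [← dg]; rfl))

/-! ### Topology of the quotient -/

lemma continuous_reProj : Continuous fun z : {z : Fin 3 → ℂ // z ≠ 0} => reProj z.1 := by
  have hz : ∀ i, Continuous fun z : {z : Fin 3 → ℂ // z ≠ 0} => z.1 i :=
    fun i => (continuous_apply i).comp continuous_subtype_val
  have hsq : ∀ i, Continuous fun z : {z : Fin 3 → ℂ // z ≠ 0} => Complex.normSq (z.1 i) :=
    fun i => Complex.continuous_normSq.comp (hz i)
  have hN : Continuous fun z : {z : Fin 3 → ℂ // z ≠ 0} => hermSq z.1 := by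
    unfold hermSq
    exact ((hsq 0).add (hsq 1)).add (hsq 2)
  have hne : ∀ z : {z : Fin 3 → ℂ // z ≠ 0}, hermSq z.1 ≠ 0 := fun z => (hermSq_pos z.2).ne'
  have hre : ∀ i j, Continuous fun z : {z : Fin 3 → ℂ // z ≠ 0} =>
      (z.1 i * starRingEnd ℂ (z.1 j)).re :=
    fun i j => Complex.continuous_re.comp ((hz i).mul
      (Complex.continuous_conj.comp (hz j)))
  refine (PiLp.continuous_toLp 2 _).comp (continuous_pi fun i => ?_)
  fin_cases i
  · exact (hsq 0).div hN hne
  · exact (hsq 1).div hN hne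
  · exact (hre 0 1).div hN hne
  · exact (hre 0 2).div hN hne
  · exact (hre 1 2).div hN hne

/-- `reProj` on the quotient of `ℙ(ℂ³)` by conjugation. -/
noncomputable def reProjQuot : Quot conjRel → EuclideanSpace ℝ (Fin 5) :=
  Quot.lift
    (Projectivization.lift (fun z => reProj z.1) (by
      rintro ⟨a, ha⟩ ⟨b, hb⟩ t (rfl : a = t • b)
      exact reProj_smul t (by rintro rfl; simp at ha) b))
    (by
      rintro _ _ ⟨z, hz, hz', rfl, rfl⟩
      exact (reProj_conj z).symm)

lemma reProjQuot_mk (z : Fin 3 → ℂ) (hz : z ≠ 0) :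
    reProjQuot (Quot.mk _ (Projectivization.mk ℂ z hz)) = reProj z := rfl

lemma continuous_reProjQuot : Continuous reProjQuot :=
  continuous_quot_lift _ (continuous_quot_lift _ continuous_reProj)

lemma reProjQuot_injective : Function.Injective reProjQuot := by
  rintro ⟨a⟩ ⟨b⟩ h
  induction a using Projectivization.ind with | h z hz
  induction b using Projectivization.ind with | h w hw
  have hg := gram_of_reProj_eq hz hw h
  obtain ⟨s, hs | hs⟩ := eq_smul_or_eq_smul_conj hw hg
  · exact congrArg _ ((Projectivization.mk_eq_mk_iff' ℂ w z hw hz).2 ⟨s, hs.symm⟩).symm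
  · have hz' : (fun i => starRingEnd ℂ (z i)) ≠ 0 := by
      intro h0
      rw [h0, smul_zero] at hs
      exact hw hs
    refine Quot.sound ⟨z, hz, hz', rfl, ?_⟩
    exact (Projectivization.mk_eq_mk_iff' ℂ w _ hw hz').2 ⟨s, hs.symm⟩

lemma range_reProjQuot : Set.range reProjQuot = frontier psdBody := by
  ext v
  constructor
  · rintro ⟨⟨a⟩, rfl⟩
    induction a using Projectivization.ind with | h z hz
    exact reProj_mem_frontier hz
  · intro hv
    obtain ⟨z, hz, rfl⟩ := exists_reProj_eq hv
    exact ⟨Quot.mk _ (Projectivization.mk ℂ z hz), rfl⟩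

/-- The quotient is the continuous image of the unit sphere of `ℂ³`. -/
instance compactSpace_quot_conjRel : CompactSpace (Quot conjRel) := by
  let g : Metric.sphere (0 : Fin 3 → ℂ) 1 → Quot conjRel := fun z =>
    Quot.mk _ (Projectivization.mk ℂ z.1 (ne_zero_of_mem_unit_sphere z))
  have hg : Continuous g := by
    have h1 : Continuous fun z : Metric.sphere (0 : Fin 3 → ℂ) 1 =>
        (⟨z.1, ne_zero_of_mem_unit_sphere z⟩ : {z : Fin 3 → ℂ // z ≠ 0}) := by fun_prop
    have h2 : Continuous fun z : {z : Fin 3 → ℂ // z ≠ 0} =>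
      (Projectivization.mk ℂ z.1 z.2 : CP2) := continuous_quot_mk
    exact continuous_quot_mk.comp (h2.comp h1)
  refine Function.Surjective.compactSpace (f := g) hg (fun a => ?_)
  obtain ⟨a⟩ := a
  induction a using Projectivization.ind with | h z hz
  have hn : ‖z‖ ≠ 0 := norm_ne_zero_iff.2 hz
  refine ⟨⟨(‖z‖⁻¹ : ℂ) • z, by simp [norm_smul, hn]⟩, congrArg (Quot.mk conjRel) ?_⟩
  exact (Projectivization.mk_eq_mk_iff' ℂ _ z _ hz).2 ⟨_, rfl⟩

/-- The quotient of the complex projective plane by complex conjugation is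
homeomorphic to the 4-dimensional sphere. -/
theorem cp2_mod_conj_homeomorph_sphere :
    Nonempty (Quot conjRel ≃ₜ Metric.sphere (0 : EuclideanSpace ℝ (Fin 5)) 1) := by
  obtain ⟨h, -, -, hfr⟩ := exists_homeomorph_image_interior_closure_frontier_eq_unitBall
    convex_psdBody interior_psdBody_nonempty isBounded_psdBody
  have hrange : Set.range (h ∘ reProjQuot) = Metric.sphere 0 1 := by
    rw [Set.range_comp, range_reProjQuot, hfr]
  let e := (Equiv.ofInjective _ (h.injective.comp reProjQuot_injective)).trans
    (Equiv.setCongr hrange)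
  have he : Continuous e :=
    Continuous.subtype_mk (h.continuous.comp continuous_reProjQuot) _
  exact ⟨he.homeoOfEquivCompactToT2⟩
end

section
/- The quotient of the quaternionic projective plane by the circle group U(1) is the 7-sphere: the quotient topological space of P₂ by the equivalence relation X ~ Y iff there exists a complex number λ with ‖λ‖ = 1 such that Y i j = λ * (X i j) * conj(λ) for all i, j (quaternion multiplication, viewing λ ∈ ℂ ⊂ ℍ) is homeomorphic to the unit sphere in ℝ⁸ (the 7-dimensional sphere S⁷). -/
/-!
Write a quaternion as `a + b j` with `a`, `b` complex. Conjugation by a unit complex number `λ`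
sends it to `a + λ² b j`. Accordingly `X ∈ P₂` is `A + B j` with `A` Hermitian and `B`
antisymmetric, both complex, and `U(1)` fixes `A` and rotates `B`. If `X = X(x)` with
`x = u + v j`, then `A = u u^* + v v^*`, and by Cauchy-Binet (`qB_mul_star_qB`) the products
`B i j * conj (B k l)` are `2 × 2` minors of `A`. So `A` determines `B` up to a phase
(`exists_phase`), and the quotient is the space of all matrices `A` that occur
(`u1Rel_of_aMat_eq`).

These are exactly the singular positive semidefinite Hermitian `3 × 3` matrices of trace one, that
is, the boundary of a compact convex body in an affine space of dimension `8` with `I / 3` in its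
interior. Radial projection from `I / 3` (`toSphere`) identifies this boundary with `S⁷`.

* Injectivity: if `A` and `A' = I / 3 + c (A - I / 3)` both occur and `A w = 0` with `w ≠ 0`, then
  `0 ≤ w^* A' w = (1 - c) |w|² / 3`, so `c ≤ 1` (`scale_le_one`); by symmetry `c = 1`.
* Surjectivity: if `H ≠ 0` is traceless Hermitian with least eigenvalue `-μ`, then `(I + H / μ) / 3`
  has nonnegative eigenvalues, one of them zero, so it is of the form `u u^* + v v^*`
  (`exists_decomp`).

The quotient is compact and the sphere is Hausdorff, so the continuous bijection is a
homeomorphism.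
-/


open scoped Quaternion

/-- The inclusion `ℂ ⊂ ℍ` (span of `1` and `i`). -/
def Complex.toQuat (z : ℂ) : ℍ[ℝ] := ⟨z.re, z.im, 0, 0⟩

/-- The model `P₂` of the quaternionic projective plane `HP²`: matrices
`X(x) i j = x i * conj (x j)` for unit vectors `x ∈ ℍ³`. -/
def P2 : Set (Matrix (Fin 3) (Fin 3) ℍ[ℝ]) :=
  { M | ∃ x : Fin 3 → ℍ[ℝ], (∑ i, ‖x i‖ ^ 2) = 1 ∧ ∀ i j, M i j = x i * star (x j) }

/-- The relation on `P₂` identifying `X` with `λ X λ⁻¹` for unit complex numbers `λ`. -/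
def u1Rel (X Y : P2) : Prop :=
  ∃ lam : ℂ, ‖lam‖ = 1 ∧
    ∀ i j, (Y : Matrix (Fin 3) (Fin 3) ℍ[ℝ]) i j =
      lam.toQuat * (X : Matrix (Fin 3) (Fin 3) ℍ[ℝ]) i j * star lam.toQuat

/-! ### Quaternions as pairs of complex numbers -/

/-- The complex coordinate `a` of a quaternion `q = a + b j`. -/
def qA (q : ℍ[ℝ]) : ℂ := ⟨q.re, q.imI⟩

/-- The complex coordinate `b` of a quaternion `q = a + b j`. -/
def qB (q : ℍ[ℝ]) : ℂ := ⟨q.imJ, q.imK⟩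

lemma quat_ext {p q : ℍ[ℝ]} (ha : qA p = qA q) (hb : qB p = qB q) : p = q := by
  have h1 := congrArg Complex.re ha
  have h2 := congrArg Complex.im ha
  have h3 := congrArg Complex.re hb
  have h4 := congrArg Complex.im hb
  exact Quaternion.ext _ _ h1 h2 h3 h4

lemma qA_mul_star (p q : ℍ[ℝ]) :
    qA (p * star q) = qA p * star (qA q) + qB p * star (qB q) := by
  apply Complex.ext <;> simp [qA, qB] <;> ring

lemma qB_mul_star (p q : ℍ[ℝ]) :
    qB (p * star q) = qB p * qA q - qA p * qB q := by
  apply Complex.ext <;> simp [qA, qB] <;> ring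

lemma toQuat_re (l : ℂ) : l.toQuat.re = l.re := rfl

lemma toQuat_imI (l : ℂ) : l.toQuat.imI = l.im := rfl

lemma toQuat_imJ (l : ℂ) : l.toQuat.imJ = 0 := rfl

lemma toQuat_imK (l : ℂ) : l.toQuat.imK = 0 := rfl

lemma qA_conj (l : ℂ) (q : ℍ[ℝ]) :
    qA (l.toQuat * q * star l.toQuat) = l * star l * qA q := by
  apply Complex.ext <;> simp [qA, toQuat_re, toQuat_imI, toQuat_imJ, toQuat_imK] <;> ring

lemma qB_conj (l : ℂ) (q : ℍ[ℝ]) :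
    qB (l.toQuat * q * star l.toQuat) = l ^ 2 * qB q := by
  apply Complex.ext <;> simp [qB, pow_two, toQuat_re, toQuat_imI, toQuat_imJ, toQuat_imK] <;> ring

lemma norm_sq_eq_qA (q : ℍ[ℝ]) : ‖q‖ ^ 2 = (qA (q * star q)).re := by
  rw [qA_mul_star, pow_two, ← Quaternion.normSq_eq_norm_mul_self, Quaternion.normSq_def']
  simp [qA, qB]; ring

/-! ### The complex part determines the orbit -/

/-- Two complex vectors with the same Gram matrix `b b^*` differ by a phase. -/
lemma exists_phase {ι : Type*} (b b' : ι → ℂ)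
    (h : ∀ p q, b p * star (b q) = b' p * star (b' q)) :
    ∃ c : ℂ, ‖c‖ = 1 ∧ ∀ p, b' p = c * b p := by
  by_cases hb : ∀ p, b p = 0
  · refine ⟨1, by simp, fun p => ?_⟩
    have := h p p
    simpa [hb] using this
  · push Not at hb
    obtain ⟨p₀, h₀⟩ := hb
    have hn : ‖b p₀‖ = ‖b' p₀‖ := by
      have := congrArg norm (h p₀ p₀)
      simp only [norm_mul, norm_star] at this
      nlinarith [norm_nonneg (b p₀), norm_nonneg (b' p₀), norm_pos_iff.2 h₀]
    have h₀' : b' p₀ ≠ 0 := by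
      rw [← norm_ne_zero_iff, ← hn]; exact norm_ne_zero_iff.2 h₀
    refine ⟨b' p₀ / b p₀, ?_, fun p => ?_⟩
    · rw [norm_div, ← hn, div_self (norm_ne_zero_iff.2 h₀)]
    · have h1 := h p p₀
      have h2 := h p₀ p₀
      have h3 : star (b' p₀) ≠ 0 := star_ne_zero.2 h₀'
      rw [div_mul_eq_mul_div, eq_div_iff h₀]
      apply mul_right_cancel₀ h3
      linear_combination (-b p₀) * h1 + b p * h2

/-- The complex part `A` of a quaternionic matrix `X = A + B j`. -/
def aMat (X : Matrix (Fin 3) (Fin 3) ℍ[ℝ]) : Matrix (Fin 3) (Fin 3) ℂ :=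
  Matrix.of fun i j => qA (X i j)

/-- The `2 × 2` minors of `A` are the products of the entries of `B` (Cauchy-Binet). -/
lemma qB_mul_star_qB {X : Matrix (Fin 3) (Fin 3) ℍ[ℝ]} (hX : X ∈ P2) (i j k l : Fin 3) :
    qB (X i j) * star (qB (X k l)) =
      aMat X i k * aMat X j l - aMat X i l * aMat X j k := by
  obtain ⟨x, -, hx⟩ := hX
  simp only [aMat, Matrix.of_apply, hx, qA_mul_star, qB_mul_star, star_sub, star_mul']
  ring

lemma u1Rel_of_aMat_eq (X Y : P2) (h : aMat X.1 = aMat Y.1) : u1Rel X Y := by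
  obtain ⟨c, hc, hB⟩ := exists_phase (fun p : Fin 3 × Fin 3 => qB (X.1 p.1 p.2))
    (fun p : Fin 3 × Fin 3 => qB (Y.1 p.1 p.2)) (fun p q => by
      rw [qB_mul_star_qB X.2, qB_mul_star_qB Y.2, h])
  obtain ⟨l, hl⟩ := IsAlgClosed.exists_pow_nat_eq c (n := 2) (by norm_num)
  have hn : ‖l‖ = 1 := by
    have : ‖l‖ ^ 2 = 1 := by rw [← norm_pow, hl, hc]
    nlinarith [norm_nonneg l]
  refine ⟨l, hn, fun i j => quat_ext ?_ ?_⟩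
  · have h1 : l * star l = 1 := by
      have := Complex.mul_conj l
      rw [Complex.normSq_eq_norm_sq, hn] at this
      simpa using this
    rw [qA_conj, h1, one_mul]
    exact (congrFun (congrFun h i) j).symm
  · rw [qB_conj, hl]; exact hB (i, j)

lemma aMat_eq_of_u1Rel (X Y : P2) (h : u1Rel X Y) : aMat X.1 = aMat Y.1 := by
  obtain ⟨l, hn, h⟩ := h
  have h1 : l * star l = 1 := by
    have := Complex.mul_conj l
    rw [Complex.normSq_eq_norm_sq, hn] at this
    simpa using this
  ext i j
  simp only [aMat, Matrix.of_apply]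
  rw [h i j, qA_conj, h1, one_mul]

/-! ### Coordinates on Hermitian matrices of trace one -/

/-- Affine coordinates on the Hermitian `3 × 3` matrices of trace one, with origin `I / 3`. The
remaining entries, determined by hermiticity and the trace, are not read. -/
noncomputable def cvec (A : Matrix (Fin 3) (Fin 3) ℂ) : EuclideanSpace ℝ (Fin 8) :=
  !₂[(A 0 0).re - 1 / 3, (A 1 1).re - 1 / 3, (A 0 1).re, (A 0 1).im, (A 0 2).re, (A 0 2).im,
    (A 1 2).re, (A 1 2).im]

/-- The traceless Hermitian matrix with given coordinates. -/
def hmat (v : EuclideanSpace ℝ (Fin 8)) : Matrix (Fin 3) (Fin 3) ℂ :=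
  !![⟨v 0, 0⟩, ⟨v 2, v 3⟩, ⟨v 4, v 5⟩;
     ⟨v 2, -v 3⟩, ⟨v 1, 0⟩, ⟨v 6, v 7⟩;
     ⟨v 4, -v 5⟩, ⟨v 6, -v 7⟩, ⟨-v 0 - v 1, 0⟩]

lemma hmat_smul (c : ℝ) (v : EuclideanSpace ℝ (Fin 8)) :
    hmat (c • v) = (c : ℂ) • hmat v := by
  ext i j
  fin_cases i <;> fin_cases j <;> apply Complex.ext <;> simp [hmat] <;> ring

lemma hmat_isHermitian (v : EuclideanSpace ℝ (Fin 8)) : (hmat v).IsHermitian := by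
  ext i j
  fin_cases i <;> fin_cases j <;> apply Complex.ext <;> simp [hmat]

lemma hmat_trace (v : EuclideanSpace ℝ (Fin 8)) : (hmat v).trace = 0 := by
  apply Complex.ext <;> simp [hmat, Matrix.trace, Fin.sum_univ_three]

lemma hmat_eq_zero {v : EuclideanSpace ℝ (Fin 8)} (h : hmat v = 0) : v = 0 := by
  have h' : ∀ i j, hmat v i j = 0 := fun i j => by rw [h]; rfl
  ext k
  have := h' 0 0; have := h' 1 1; have := h' 0 1; have := h' 0 2; have := h' 1 2
  simp [hmat, Complex.ext_iff] at *
  fin_cases k <;> simp_all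

lemma cvec_hmat (c : ℝ) (v : EuclideanSpace ℝ (Fin 8)) (A : Matrix (Fin 3) (Fin 3) ℂ)
    (hA : A = (1 / 3 : ℂ) • (1 : Matrix (Fin 3) (Fin 3) ℂ) + (c : ℂ) • hmat v) :
    cvec A = c • v := by
  subst hA
  ext k
  fin_cases k <;> simp [cvec, hmat]

/-- A matrix `X ∈ P₂` has `A = I / 3 + H`, with `H` traceless Hermitian. -/
lemma aMat_eq {X : Matrix (Fin 3) (Fin 3) ℍ[ℝ]} (hX : X ∈ P2) :
    aMat X = (1 / 3 : ℂ) • (1 : Matrix (Fin 3) (Fin 3) ℂ) + hmat (cvec (aMat X)) := by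
  obtain ⟨x, hn, hx⟩ := hX
  simp only [norm_sq_eq_qA, Fin.sum_univ_three, qA_mul_star] at hn
  simp at hn
  ext i j
  fin_cases i <;> fin_cases j <;> apply Complex.ext <;>
    simp [hmat, cvec, aMat, hx, qA_mul_star] <;> linarith

/-! ### Rays from `I / 3` and injectivity -/

/-- The Hermitian form `w^* A w`. -/
def qf (A : Matrix (Fin 3) (Fin 3) ℂ) (w : Fin 3 → ℂ) : ℂ :=
  ∑ i, ∑ j, star (w i) * A i j * w j

lemma qf_add (A B : Matrix (Fin 3) (Fin 3) ℂ) (w : Fin 3 → ℂ) :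
    qf (A + B) w = qf A w + qf B w := by
  simp only [qf, ← Finset.sum_add_distrib, Matrix.add_apply]
  exact Finset.sum_congr rfl fun i _ => Finset.sum_congr rfl fun j _ => by ring

lemma qf_smul (c : ℂ) (A : Matrix (Fin 3) (Fin 3) ℂ) (w : Fin 3 → ℂ) :
    qf (c • A) w = c * qf A w := by
  simp only [qf, Finset.mul_sum, Matrix.smul_apply, smul_eq_mul]
  exact Finset.sum_congr rfl fun i _ => Finset.sum_congr rfl fun j _ => by ring

lemma qf_one (w : Fin 3 → ℂ) : qf 1 w = ((∑ i, ‖w i‖ ^ 2 : ℝ) : ℂ) := by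
  simp [qf, Matrix.one_apply, Complex.conj_mul']

lemma qf_aMat (X : Matrix (Fin 3) (Fin 3) ℍ[ℝ]) (x : Fin 3 → ℍ[ℝ])
    (hx : ∀ i j, X i j = x i * star (x j)) (w : Fin 3 → ℂ) :
    qf (aMat X) w = ((‖∑ i, star (qA (x i)) * w i‖ ^ 2 + ‖∑ i, star (qB (x i)) * w i‖ ^ 2 : ℝ) : ℂ) := by
  push_cast
  rw [← Complex.conj_mul', ← Complex.conj_mul']
  simp only [qf, aMat, Matrix.of_apply, hx, qA_mul_star, Fin.sum_univ_three, map_add, map_mul,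
    Complex.star_def, Complex.conj_conj]
  ring

lemma qf_nonneg {X : Matrix (Fin 3) (Fin 3) ℍ[ℝ]} (hX : X ∈ P2) (w : Fin 3 → ℂ) :
    0 ≤ (qf (aMat X) w).re := by
  obtain ⟨x, -, hx⟩ := hX
  rw [qf_aMat X x hx, Complex.ofReal_re]
  positivity

/-- `A = u u^* + v v^*` has rank at most two, hence is singular. -/
lemma exists_qf_eq_zero {X : Matrix (Fin 3) (Fin 3) ℍ[ℝ]} (hX : X ∈ P2) :
    ∃ w : Fin 3 → ℂ, w ≠ 0 ∧ qf (aMat X) w = 0 := by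
  obtain ⟨x, -, hx⟩ := hX
  let M : Matrix (Fin 2) (Fin 3) ℂ :=
    Matrix.of ![fun i => star (qA (x i)), fun i => star (qB (x i))]
  have hk : LinearMap.ker M.mulVecLin ≠ ⊥ := LinearMap.ker_ne_bot_of_finrank_lt (by simp)
  obtain ⟨w, hw, hw0⟩ := (Submodule.ne_bot_iff _).1 hk
  refine ⟨w, hw0, ?_⟩
  have hw : M.mulVec w = 0 := hw
  have h0 := congrFun hw 0
  have h1 := congrFun hw 1
  simp only [M, Matrix.mulVec, dotProduct, Matrix.of_apply, Matrix.cons_val_zero,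
    Matrix.cons_val_one, Pi.zero_apply] at h0 h1
  rw [qf_aMat X x hx, h0, h1]
  simp

/-- Along a ray from `I / 3` a point of the image of `P₂` cannot be followed by another one:
beyond a singular matrix the ray leaves the cone of positive semidefinite matrices. -/
lemma scale_le_one {X Y : Matrix (Fin 3) (Fin 3) ℍ[ℝ]} (hX : X ∈ P2) (hY : Y ∈ P2) (c : ℝ)
    (h : cvec (aMat Y) = c • cvec (aMat X)) : c ≤ 1 := by
  obtain ⟨w, hw, hq⟩ := exists_qf_eq_zero hX
  have h1 := congrArg (qf · w) (aMat_eq hX)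
  have h2 := congrArg (qf · w) (aMat_eq hY)
  simp only [h, hmat_smul, qf_add, qf_smul, qf_one] at h1 h2
  have h3 : qf (aMat Y) w = (((1 - c) / 3 * ∑ i, ‖w i‖ ^ 2 : ℝ) : ℂ) := by
    push_cast at h1 h2 ⊢
    rw [hq] at h1
    linear_combination h2 - c * h1
  have h4 := qf_nonneg hY w
  rw [h3, Complex.ofReal_re] at h4
  have h5 : 0 < ∑ i, ‖w i‖ ^ 2 := by
    obtain ⟨i, hi⟩ := Function.ne_iff.1 hw
    exact Finset.sum_pos' (fun _ _ => by positivity)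
      ⟨i, Finset.mem_univ _, by have := norm_pos_iff.2 hi; positivity⟩
  have := nonneg_of_mul_nonneg_left h4 h5
  linarith

lemma cvec_ne_zero {X : Matrix (Fin 3) (Fin 3) ℍ[ℝ]} (hX : X ∈ P2) : cvec (aMat X) ≠ 0 := by
  intro h
  have := scale_le_one hX hX 2 (by simp [h])
  norm_num at this

/-- The radial projection from `I / 3` of the complex part of `X`. -/
noncomputable def toSphere (X : P2) : Metric.sphere (0 : EuclideanSpace ℝ (Fin 8)) 1 :=
  ⟨‖cvec (aMat X.1)‖⁻¹ • cvec (aMat X.1), by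
    have := norm_ne_zero_iff.2 (cvec_ne_zero X.2)
    simp [norm_smul, this]⟩

lemma continuous_toSphere : Continuous toSphere := by
  have hre : Continuous (fun q : ℍ[ℝ] => q.re) := Quaternion.continuous_re
  have hc : Continuous (fun X : P2 => cvec (aMat X.1)) := by
    refine (PiLp.continuous_toLp 2 _).comp (continuous_pi fun k => ?_)
    have he : ∀ i j, Continuous fun X : P2 => X.1 i j := fun i j =>
      continuous_subtype_val.matrix_elem i j
    have h1 := fun i j => Quaternion.continuous_re.comp (he i j)
    have h2 := fun i j => Quaternion.continuous_imI.comp (he i j)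
    fin_cases k
    · exact (h1 0 0).sub continuous_const
    · exact (h1 1 1).sub continuous_const
    · exact h1 0 1
    · exact h2 0 1
    · exact h1 0 2
    · exact h2 0 2
    · exact h1 1 2
    · exact h2 1 2
  exact Continuous.subtype_mk
    ((hc.norm.inv₀ fun X => norm_ne_zero_iff.2 (cvec_ne_zero X.2)).smul hc) _

lemma aMat_eq_of_toSphere_eq {X Y : P2} (h : toSphere X = toSphere Y) :
    aMat X.1 = aMat Y.1 := by
  have h := congrArg Subtype.val h
  simp only [toSphere] at h
  have hx := norm_pos_iff.2 (cvec_ne_zero X.2)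
  have hy := norm_pos_iff.2 (cvec_ne_zero Y.2)
  set a := ‖cvec (aMat X.1)‖
  set b := ‖cvec (aMat Y.1)‖
  have e1 : cvec (aMat X.1) = (a / b) • cvec (aMat Y.1) := by
    rw [div_eq_mul_inv, mul_smul, ← h, smul_inv_smul₀ hx.ne']
  have e2 : cvec (aMat Y.1) = (b / a) • cvec (aMat X.1) := by
    rw [div_eq_mul_inv, mul_smul, h, smul_inv_smul₀ hy.ne']
  have l1 := scale_le_one Y.2 X.2 _ e1
  have l2 := scale_le_one X.2 Y.2 _ e2
  rw [div_le_one hy] at l1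
  rw [div_le_one hx] at l2
  rw [le_antisymm l1 l2, div_self hy.ne', one_smul] at e1
  rw [aMat_eq X.2, aMat_eq Y.2, e1]

/-! ### Surjectivity -/

/-- A traceless Hermitian matrix `H ≠ 0`, with least eigenvalue `-μ < 0`, gives the singular
positive semidefinite matrix `(I + H / μ) / 3`. It has rank at most two, hence has the form
`u u^* + v v^*`; the constant `c` is `1 / (3 μ)`. -/
lemma exists_decomp {H : Matrix (Fin 3) (Fin 3) ℂ} (hH : H.IsHermitian) (ht : H.trace = 0)
    (h0 : H ≠ 0) : ∃ c : ℝ, 0 < c ∧ ∃ u v : Fin 3 → ℂ, ∀ i j,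
      u i * star (u j) + v i * star (v j) =
        ((1 / 3 : ℂ) • (1 : Matrix (Fin 3) (Fin 3) ℂ) + (c : ℂ) • H) i j := by
  obtain ⟨k₀, hk₀⟩ := Finite.exists_min hH.eigenvalues
  have hsum : ∑ k, hH.eigenvalues k = 0 := by
    have := hH.trace_eq_sum_eigenvalues
    rw [ht] at this
    apply Complex.ofReal_injective
    rw [Complex.ofReal_sum, Complex.ofReal_zero]
    exact this.symm
  have hneg : hH.eigenvalues k₀ < 0 := by
    by_contra hge
    push Not at hge
    apply h0
    rw [← hH.eigenvalues_eq_zero_iff]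
    funext k
    exact (Finset.sum_eq_zero_iff_of_nonneg fun k _ => hge.trans (hk₀ k)).1 hsum k
      (Finset.mem_univ _)
  obtain ⟨m, hm, hmk⟩ : ∃ m : ℝ, 0 < m ∧ hH.eigenvalues k₀ = -m := ⟨_, neg_pos.2 hneg, by ring⟩
  -- the eigenvalues of `(I + H / m) / 3`
  let d : Fin 3 → ℝ := fun k => 1 / 3 + 1 / (3 * m) * hH.eigenvalues k
  have hd0 : d k₀ = 0 := by simp only [d, hmk]; field_simp; ring
  have hd : ∀ k, 0 ≤ d k := fun k => by
    rw [← hd0]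
    have := mul_le_mul_of_nonneg_left (hk₀ k) (by positivity : 0 ≤ 1 / (3 * m))
    simp only [d]; linarith
  let U : Matrix (Fin 3) (Fin 3) ℂ := hH.eigenvectorUnitary
  have hU : U * star U = 1 := Unitary.mul_star_self_of_mem hH.eigenvectorUnitary.2
  have hUij : ∀ i j, ∑ k, U i k * star (U j k) = (1 : Matrix (Fin 3) (Fin 3) ℂ) i j :=
    fun i j => by rw [← hU]; simp [Matrix.mul_apply, Matrix.star_apply]
  have hHij : ∀ i j, ∑ k, U i k * hH.eigenvalues k * star (U j k) = H i j := fun i j => by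
    conv_rhs => rw [hH.spectral_theorem, Unitary.conjStarAlgAut_apply]
    rw [Matrix.mul_apply]
    simp [U, Matrix.mul_diagonal, Matrix.star_apply]
  let r : Fin 3 → Fin 3 → ℂ := fun k i => (Real.sqrt (d k) : ℂ) * U i k
  have hr : ∀ k i j, r k i * star (r k j) = d k * (U i k * star (U j k)) := fun k i j => by
    have : ((Real.sqrt (d k) : ℂ)) * (Real.sqrt (d k) : ℂ) = d k := by
      exact_mod_cast Real.mul_self_sqrt (hd k)
    simp only [r, star_mul', Complex.star_def, Complex.conj_ofReal]
    linear_combination (U i k * (starRingEnd ℂ) (U j k)) * this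
  refine ⟨1 / (3 * m), by positivity, r (k₀.succAbove 0), r (k₀.succAbove 1), fun i j => ?_⟩
  have hall : ∑ k, r k i * star (r k j) =
      r (k₀.succAbove 0) i * star (r (k₀.succAbove 0) j) +
        r (k₀.succAbove 1) i * star (r (k₀.succAbove 1) j) := by
    rw [Fin.sum_univ_succAbove _ k₀, hr k₀, hd0, Fin.sum_univ_two]
    simp
  rw [← hall, Matrix.add_apply, Matrix.smul_apply, Matrix.smul_apply, ← hUij, ← hHij,
    smul_eq_mul, smul_eq_mul, Finset.mul_sum, Finset.mul_sum, ← Finset.sum_add_distrib]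
  refine Finset.sum_congr rfl fun k _ => ?_
  rw [hr]
  simp only [d]
  push_cast
  ring

lemma toSphere_surjective : Function.Surjective toSphere := by
  rintro ⟨v, hv⟩
  have hv : ‖v‖ = 1 := by simpa using hv
  have hne : hmat v ≠ 0 := fun h => by simp [hmat_eq_zero h] at hv
  obtain ⟨c, hc, a, b, hab⟩ := exists_decomp (hmat_isHermitian v) (hmat_trace v) hne
  let x : Fin 3 → ℍ[ℝ] := fun i => ⟨(a i).re, (a i).im, (b i).re, (b i).im⟩
  have hxA : ∀ i, qA (x i) = a i := fun i => rfl
  have hxB : ∀ i, qB (x i) = b i := fun i => rfl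
  have hn : ∑ i, ‖x i‖ ^ 2 = 1 := by
    simp only [norm_sq_eq_qA, qA_mul_star, hxA, hxB, hab, Fin.sum_univ_three]
    simp [hmat]
    ring
  let X : P2 := ⟨Matrix.of fun i j => x i * star (x j), x, hn, fun i j => rfl⟩
  have hA : aMat X.1 = (1 / 3 : ℂ) • (1 : Matrix (Fin 3) (Fin 3) ℂ) + (c : ℂ) • hmat v := by
    ext i j
    rw [← hab i j, ← hxA, ← hxA, ← hxB, ← hxB, ← qA_mul_star]
    rfl
  refine ⟨X, Subtype.ext ?_⟩
  simp only [toSphere, cvec_hmat c v _ hA, norm_smul, hv, Real.norm_of_nonneg hc.le, mul_one]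
  exact inv_smul_smul₀ hc.ne' v

/-! ### Compactness and the homeomorphism -/

lemma isCompact_P2 : IsCompact P2 := by
  have hS : IsCompact {x : Fin 3 → ℍ[ℝ] | ∑ i, ‖x i‖ ^ 2 = 1} := by
    have : ProperSpace ℍ[ℝ] := FiniteDimensional.proper ℝ _
    refine Metric.isCompact_of_isClosed_isBounded
      (isClosed_eq (by fun_prop) continuous_const) ?_
    refine isBounded_iff_forall_norm_le.2 ⟨1, fun x (hx : _ = _) => ?_⟩
    refine (pi_norm_le_iff_of_nonneg zero_le_one).2 fun i => ?_
    have : ‖x i‖ ^ 2 ≤ ∑ i, ‖x i‖ ^ 2 :=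
      Finset.single_le_sum (f := fun i => ‖x i‖ ^ 2) (fun _ _ => by positivity)
        (Finset.mem_univ i)
    nlinarith [norm_nonneg (x i)]
  have hf : Continuous fun x : Fin 3 → ℍ[ℝ] =>
      (Matrix.of fun i j => x i * star (x j) : Matrix (Fin 3) (Fin 3) ℍ[ℝ]) :=
    continuous_matrix fun i j => by
      simp only [Matrix.of_apply]
      fun_prop
  convert hS.image hf using 1
  ext M
  constructor
  · rintro ⟨x, hx, h⟩
    exact ⟨x, hx, by ext1 i j; exact (h i j).symm⟩
  · rintro ⟨x, hx, rfl⟩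
    exact ⟨x, hx, fun i j => rfl⟩

/-- The quotient of the quaternionic projective plane by the circle group `U(1)` is
homeomorphic to the 7-dimensional sphere. -/
theorem hp2_mod_u1_homeomorph_sphere :
    Nonempty (Quot u1Rel ≃ₜ Metric.sphere (0 : EuclideanSpace ℝ (Fin 8)) 1) := by
  have : CompactSpace P2 := isCompact_iff_compactSpace.1 isCompact_P2
  have hresp : ∀ X Y : P2, u1Rel X Y → toSphere X = toSphere Y := fun X Y h => by
    simp only [toSphere, aMat_eq_of_u1Rel X Y h]
  let f : Quot u1Rel → Metric.sphere (0 : EuclideanSpace ℝ (Fin 8)) 1 := Quot.lift toSphere hresp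
  have hf : Continuous f := continuous_quot_lift hresp continuous_toSphere
  have hbij : Function.Bijective f := by
    refine ⟨?_, fun s => ?_⟩
    · rintro ⟨X⟩ ⟨Y⟩ h
      exact Quot.sound (u1Rel_of_aMat_eq X Y (aMat_eq_of_toSphere_eq h))
    · obtain ⟨X, hX⟩ := toSphere_surjective s
      exact ⟨Quot.mk _ X, hX⟩
  exact ⟨hf.homeoOfEquivCompactToT2 (f := Equiv.ofBijective f hbij)⟩
end

section
/- (Theorem B′, case n = 1, in the model P₁(C) ≅ CP² × CP².) The set { (P + Q)/2 : P, Q ∈ P₁ } is exactly the set Σ₁ = { M : 3×3 complex Hermitian matrix | M is positive semidefinite, tr M = 1, and det M = 0 }. Equivalently, a 3×3 complex Hermitian positive semidefinite matrix of trace 1 and determinant 0 can be written as the average of two rank-one Hermitian orthogonal projections, and every such average has these properties. -/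
/-!
By the spectral theorem a positive semidefinite matrix with zero determinant has a zero
eigenvalue, so in dimension `3` it is `M = u u* + v v*` with `u ⟂ v` (two orthogonal eigenvectors,
scaled by the square roots of their eigenvalues). The parallelogram identity
`(u + v)(u + v)* + (u - v)(u - v)* = 2 (u u* + v v*)` then exhibits `M` as an average, and
orthogonality together with `tr M = 1` makes both `u + v` and `u - v` unit vectors
(`average_of_orthogonal`). Conversely an average of two rank-one projections is positive
semidefinite of trace `1`, and its determinant vanishes because its rank is at most `2`.
-/

open scoped ComplexOrder

/-- The model `P₁` of the complex projective plane `CP²`: the rank-one Hermitian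
orthogonal projections `X(x) i j = x i * conj (x j)`, `x` a unit vector of `ℂ³`. -/
def P1 : Set (Matrix (Fin 3) (Fin 3) ℂ) :=
  { M | ∃ x : Fin 3 → ℂ, (∑ i, ‖x i‖ ^ 2) = 1 ∧ ∀ i j, M i j = x i * starRingEnd ℂ (x j) }

lemma sum_norm_sq_eq_one_iff (x : Fin 3 → ℂ) :
    (∑ i, ‖x i‖ ^ 2) = 1 ↔ (∑ i, x i * starRingEnd ℂ (x i)) = 1 := by
  simp_rw [Complex.mul_conj']
  norm_cast

/-- The witnesses are the projections onto the lines spanned by `u + v` and `u - v`. -/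
lemma average_of_orthogonal {M : Matrix (Fin 3) (Fin 3) ℂ} (u v : Fin 3 → ℂ)
    (hM : ∀ i j, M i j = u i * starRingEnd ℂ (u j) + v i * starRingEnd ℂ (v j))
    (huv : ∑ i, u i * starRingEnd ℂ (v i) = 0) (htr : M.trace = 1) :
    ∃ P ∈ P1, ∃ Q ∈ P1, M = ((1 : ℝ)/2) • (P + Q) := by
  have hvu : ∑ i, v i * starRingEnd ℂ (u i) = 0 := by
    have := congrArg (starRingEnd ℂ) huv
    simpa [map_sum, mul_comm] using this
  simp only [Matrix.trace, Matrix.diag, hM, Fin.sum_univ_three] at htr huv hvu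
  refine ⟨Matrix.of fun i j => (u i + v i) * starRingEnd ℂ (u j + v j),
    ⟨fun i => u i + v i, ?_, fun _ _ => rfl⟩,
    Matrix.of fun i j => (u i - v i) * starRingEnd ℂ (u j - v j),
    ⟨fun i => u i - v i, ?_, fun _ _ => rfl⟩, ?_⟩
  · rw [sum_norm_sq_eq_one_iff]
    simp only [Fin.sum_univ_three, map_add]
    linear_combination htr + huv + hvu
  · rw [sum_norm_sq_eq_one_iff]
    simp only [Fin.sum_univ_three, map_sub]
    linear_combination htr - huv - hvu
  · ext i j
    simp only [Matrix.smul_apply, Matrix.add_apply, Matrix.of_apply, hM, map_add, map_sub,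
      Complex.real_smul]
    push_cast
    ring

lemma P1.posSemidef {P : Matrix (Fin 3) (Fin 3) ℂ} (hP : P ∈ P1) : P.PosSemidef := by
  obtain ⟨x, -, hx⟩ := hP
  have : P = Matrix.vecMulVec x (star x) := by
    ext i j
    simp [hx, Matrix.vecMulVec_apply]
  rw [this]
  exact Matrix.posSemidef_vecMulVec_self_star x

lemma P1.trace_eq_one {P : Matrix (Fin 3) (Fin 3) ℂ} (hP : P ∈ P1) : P.trace = 1 := by
  obtain ⟨x, h1, hx⟩ := hP
  simpa [Matrix.trace, hx] using (sum_norm_sq_eq_one_iff x).1 h1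

/-- The spectral theorem with each unit eigenvector scaled by the square root of its eigenvalue:
`M` is the sum of `w k (w k)*` over pairwise orthogonal vectors `w k`, one of which is zero when
`M` is singular. -/
lemma eigen_expansion {M : Matrix (Fin 3) (Fin 3) ℂ} (hM : M.PosSemidef) :
    ∃ w : Fin 3 → Fin 3 → ℂ,
      (∀ i j, M i j = ∑ k, w k i * starRingEnd ℂ (w k j)) ∧
      (∀ k l, k ≠ l → ∑ i, w k i * starRingEnd ℂ (w l i) = 0) ∧
      (M.det = 0 → ∃ k, w k = 0) := by
  set U : Matrix (Fin 3) (Fin 3) ℂ := hM.isHermitian.eigenvectorUnitary.1 with hU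
  set e := hM.isHermitian.eigenvalues with he
  have hsq : ∀ k, ((√(e k) : ℝ) : ℂ) * ((√(e k) : ℝ) : ℂ) = (e k : ℂ) := fun k => by
    rw [← Complex.ofReal_mul, Real.mul_self_sqrt (hM.eigenvalues_nonneg k)]
  refine ⟨fun k i => (√(e k) : ℝ) * U i k, ?_, ?_, ?_⟩
  · intro i j
    have h := hM.isHermitian.spectral_theorem
    rw [Unitary.conjStarAlgAut_apply] at h
    have h' := congrFun (congrFun h i) j
    rw [h', Matrix.mul_apply]
    refine Finset.sum_congr rfl fun k _ => ?_
    rw [Matrix.mul_diagonal]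
    simp only [Matrix.star_apply, Function.comp, map_mul, Complex.conj_ofReal, ← hU, ← he]
    change U i k * (e k : ℂ) * starRingEnd ℂ (U j k) = _
    rw [← hsq]
    ring
  · intro k l hkl
    have h : star U * U = 1 := Unitary.coe_star_mul_self hM.isHermitian.eigenvectorUnitary
    have h' := congrFun (congrFun h l) k
    rw [Matrix.mul_apply, Matrix.one_apply_ne hkl.symm] at h'
    simp only [Matrix.star_apply] at h'
    change ∑ i, starRingEnd ℂ (U i l) * U i k = 0 at h'
    calc _ = ((√(e k) : ℝ) : ℂ) * ((√(e l) : ℝ) : ℂ) *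
          ∑ i, starRingEnd ℂ (U i l) * U i k := by
          rw [Finset.mul_sum]
          refine Finset.sum_congr rfl fun i _ => ?_
          simp only [map_mul, Complex.conj_ofReal]
          ring
      _ = 0 := by rw [h', mul_zero]
  · intro hdet
    rw [hM.isHermitian.det_eq_prod_eigenvalues, Finset.prod_eq_zero_iff] at hdet
    obtain ⟨k, -, hk⟩ := hdet
    have hk' : e k = 0 := RCLike.ofReal_eq_zero.1 hk
    exact ⟨k, by ext i; simp [hk']⟩

/-- Theorem B′ for `n = 1`: the averages `(P + Q)/2` of two rank-one Hermitian
projections are exactly the Hermitian positive semidefinite matrices of trace `1` and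
determinant `0`. -/
theorem theoremB'_n1 :
    { M : Matrix (Fin 3) (Fin 3) ℂ | ∃ P ∈ P1, ∃ Q ∈ P1, M = ((1 : ℝ)/2) • (P + Q) }
      = { M : Matrix (Fin 3) (Fin 3) ℂ |
          M.IsHermitian ∧ M.PosSemidef ∧ M.trace = 1 ∧ M.det = 0 } := by
  ext M
  simp only [Set.mem_ofPred_eq]
  constructor
  · rintro ⟨P, hP, Q, hQ, rfl⟩
    have hps : (((1 : ℝ)/2) • (P + Q)).PosSemidef :=
      ((P1.posSemidef hP).add (P1.posSemidef hQ)).smul (by norm_num)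
    refine ⟨hps.isHermitian, hps, ?_, ?_⟩
    · rw [Matrix.trace_smul, Matrix.trace_add, P1.trace_eq_one hP, P1.trace_eq_one hQ,
        Complex.real_smul]
      norm_num
    · obtain ⟨x, -, hx⟩ := hP
      obtain ⟨y, -, hy⟩ := hQ
      -- The `3 × 3` determinant of `x x* + y y*` vanishes identically as a polynomial.
      simp only [Matrix.det_fin_three, Matrix.smul_apply, Matrix.add_apply, hx, hy,
        Complex.real_smul]
      ring
  · rintro ⟨-, hM, htr, hdet⟩
    obtain ⟨w, hw, horth, hz⟩ := eigen_expansion hM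
    obtain ⟨k, hk⟩ := hz hdet
    fin_cases k
    · exact average_of_orthogonal (w 1) (w 2)
        (fun i j => by simpa [Fin.sum_univ_three, show w 0 = 0 from hk] using hw i j)
        (horth 1 2 (by decide)) htr
    · exact average_of_orthogonal (w 0) (w 2)
        (fun i j => by simpa [Fin.sum_univ_three, show w 1 = 0 from hk] using hw i j)
        (horth 0 2 (by decide)) htr
    · exact average_of_orthogonal (w 0) (w 1)
        (fun i j => by simpa [Fin.sum_univ_three, show w 2 = 0 from hk] using hw i j)
        (horth 0 1 (by decide)) htr
end

section
/- (Image of the hypersurface at infinity under the map φ₀ is the antipodal/dual RP².) The image of the conic { [z] : z ∈ ℂ³ \ {0}, z₁² + z₂² + z₃² = 0 } ⊂ CP² under X ↦ Re(X) is exactly the set of real symmetric matrices (1/2)Π where Π is a rank-two real symmetric orthogonal projection. Precisely: { Re(X(x)) : x ∈ ℂ³, ∑ᵢ ‖x i‖² = 1, x₁² + x₂² + x₃² = 0 } = { S : 3×3 real symmetric matrix | (2S)·(2S) = 2S and tr(2S) = 2 }. -/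
/-!
Write `x = a + i b` with `a, b` real. Then `Re (x x*) = a aᵀ + b bᵀ`, and the two conditions
on `x` say exactly that `√2 a, √2 b` is an orthonormal pair. Hence twice the real part is the
orthogonal projection onto the plane spanned by `a` and `b` (`two_smul_re_mem`). Conversely, the
spectral theorem writes a symmetric idempotent of trace two as `u uᵀ + v vᵀ` with `u, v`
orthonormal (`exists_orthonormal_pair`), and `x = (u + i v) / √2` lies on the conic.
-/

open Matrix

/-- If `a, b` are orthogonal of squared length `1/2`, then `2 (a aᵀ + b bᵀ)` is a symmetric
idempotent of trace two. -/
lemma two_smul_re_mem (a b : Fin 3 → ℝ) (ha : a ⬝ᵥ a = 1 / 2) (hb : b ⬝ᵥ b = 1 / 2)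
    (hab : a ⬝ᵥ b = 0) (S : Matrix (Fin 3) (Fin 3) ℝ)
    (hS : S = vecMulVec a a + vecMulVec b b) :
    S.IsSymm ∧ ((2 : ℝ) • S) * ((2 : ℝ) • S) = (2 : ℝ) • S ∧ ((2 : ℝ) • S).trace = 2 := by
  have hba : b ⬝ᵥ a = 0 := by rw [dotProduct_comm, hab]
  subst hS
  refine ⟨?_, ?_, ?_⟩
  · simp [IsSymm, transpose_add, transpose_vecMulVec]
  · simp only [smul_mul_assoc, mul_smul_comm, add_mul, mul_add, vecMulVec_mul_vecMulVec,
      ha, hb, hab, hba]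
    ext i j
    simp [vecMulVec_apply]
  · simp [trace_smul, trace_add, trace_vecMulVec, ha, hb]
    norm_num

/-- The eigenvalues of an idempotent are `0` or `1`; as they sum to two, exactly two of them are
`1`, and `u, v` are the corresponding vectors of an orthonormal eigenbasis. -/
lemma exists_orthonormal_pair (P : Matrix (Fin 3) (Fin 3) ℝ) (hs : P.IsSymm)
    (hP : P * P = P) (ht : P.trace = 2) :
    ∃ u v : Fin 3 → ℝ, u ⬝ᵥ u = 1 ∧ v ⬝ᵥ v = 1 ∧ u ⬝ᵥ v = 0 ∧
      P = vecMulVec u u + vecMulVec v v := by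
  have hH : P.IsHermitian := by
    rw [IsHermitian, conjTranspose_eq_transpose_of_trivial]
    exact hs
  obtain ⟨U, d, hU, hPd⟩ : ∃ (U : Matrix (Fin 3) (Fin 3) ℝ) (d : Fin 3 → ℝ),
      Uᵀ * U = 1 ∧ P = U * diagonal d * Uᵀ := by
    refine ⟨hH.eigenvectorUnitary, hH.eigenvalues, ?_, ?_⟩
    · have := Unitary.coe_star_mul_self hH.eigenvectorUnitary
      simpa [star_eq_conjTranspose, conjTranspose_eq_transpose_of_trivial] using this
    · have := hH.spectral_theorem
      simpa [Unitary.conjStarAlgAut_apply, star_eq_conjTranspose,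
        conjTranspose_eq_transpose_of_trivial, Function.comp_def] using this
  have hD : diagonal d = Uᵀ * P * U := by
    rw [hPd]
    simp only [Matrix.mul_assoc, hU, Matrix.mul_one]
    rw [← Matrix.mul_assoc, hU, Matrix.one_mul]
  have hU' : U * Uᵀ = 1 := mul_eq_one_comm.mp hU
  have hDD : diagonal d * diagonal d = diagonal d := by
    calc diagonal d * diagonal d = Uᵀ * (P * (U * Uᵀ) * P) * U := by
          rw [hD]; simp only [Matrix.mul_assoc]
      _ = diagonal d := by rw [hU', Matrix.mul_one, hP, hD]
  have hd : ∀ k, d k = 0 ∨ d k = 1 := by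
    intro k
    have h := congrFun (congrFun hDD k) k
    rw [diagonal_mul_diagonal, diagonal_apply_eq, diagonal_apply_eq] at h
    have h' : d k * (d k - 1) = 0 := by linarith
    rcases mul_eq_zero.mp h' with h | h
    · exact Or.inl h
    · exact Or.inr (by linarith)
  have hsum : d 0 + d 1 + d 2 = 2 := by
    rw [hPd, Matrix.mul_assoc, trace_mul_comm, Matrix.mul_assoc, hU, Matrix.mul_one,
      trace_diagonal, Fin.sum_univ_three] at ht
    exact ht
  have hcol : ∀ k l, U.col k ⬝ᵥ U.col l = if k = l then 1 else 0 := by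
    intro k l
    have h := congrFun (congrFun hU k) l
    rw [one_apply] at h
    rw [← h]
    rfl
  have hexp : P = d 0 • vecMulVec (U.col 0) (U.col 0) + d 1 • vecMulVec (U.col 1) (U.col 1)
      + d 2 • vecMulVec (U.col 2) (U.col 2) := by
    rw [hPd]
    ext i j
    simp [mul_apply, Fin.sum_univ_three, vecMulVec_apply, diagonal_apply]
    ring
  -- Of the eight patterns of eigenvalues, only the three with sum two survive.
  rcases hd 0 with h0 | h0 <;> rcases hd 1 with h1 | h1 <;> rcases hd 2 with h2 | h2 <;>
    first
    | (exfalso; rw [h0, h1, h2] at hsum; norm_num at hsum; done)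
    | skip
  · exact ⟨U.col 1, U.col 2, by simp [hcol], by simp [hcol], by simp [hcol],
      by simpa [h0, h1, h2] using hexp⟩
  · exact ⟨U.col 0, U.col 2, by simp [hcol], by simp [hcol], by simp [hcol],
      by simpa [h0, h1, h2] using hexp⟩
  · exact ⟨U.col 0, U.col 1, by simp [hcol], by simp [hcol], by simp [hcol],
      by simpa [h0, h1, h2] using hexp⟩

/-- Image of the conic `{z₁² + z₂² + z₃² = 0} ⊂ CP²` under `X ↦ Re X`: it consists of
the halves `(1/2)Π` of the rank-two real symmetric orthogonal projections `Π`. -/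
theorem image_of_conic :
    { S : Matrix (Fin 3) (Fin 3) ℝ | ∃ x : Fin 3 → ℂ,
        (∑ i, ‖x i‖ ^ 2) = 1 ∧ (∑ i, (x i) ^ 2) = 0 ∧
        S = (Matrix.of fun i j => x i * starRingEnd ℂ (x j)).map Complex.re }
      = { S : Matrix (Fin 3) (Fin 3) ℝ | S.IsSymm ∧
          ((2 : ℝ) • S) * ((2 : ℝ) • S) = (2 : ℝ) • S ∧ ((2 : ℝ) • S).trace = 2 } := by
  ext S
  constructor
  · rintro ⟨x, hn, hq, hS⟩
    have hre := congrArg Complex.re hq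
    have him := congrArg Complex.im hq
    simp only [Fin.sum_univ_three, Complex.sq_norm, Complex.normSq_apply] at hn
    simp only [Fin.sum_univ_three, pow_two, Complex.add_re, Complex.add_im, Complex.mul_re,
      Complex.mul_im, Complex.zero_re, Complex.zero_im] at hre him
    refine two_smul_re_mem (fun i => (x i).re) (fun i => (x i).im) ?_ ?_ ?_ S ?_
    · simp only [dotProduct, Fin.sum_univ_three]
      linarith
    · simp only [dotProduct, Fin.sum_univ_three]
      linarith
    · simp only [dotProduct, Fin.sum_univ_three]
      linarith
    · rw [hS]
      ext i j
      simp [vecMulVec_apply]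
  · rintro ⟨hs, hP, ht⟩
    obtain ⟨u, v, hu, hv, huv, h⟩ := exists_orthonormal_pair ((2 : ℝ) • S) (hs.smul 2) hP ht
    have hr : √(1 / 2 : ℝ) * √(1 / 2 : ℝ) = 1 / 2 := Real.mul_self_sqrt (by norm_num)
    set r := √(1 / 2 : ℝ)
    simp only [dotProduct, Fin.sum_univ_three] at hu hv huv
    refine ⟨fun i => ⟨r * u i, r * v i⟩, ?_, ?_, ?_⟩
    · simp only [Fin.sum_univ_three, Complex.sq_norm, Complex.normSq_apply]
      linear_combination (r * r) * hu + (r * r) * hv + 2 * hr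
    · apply Complex.ext
      · simp only [Fin.sum_univ_three, pow_two, Complex.add_re, Complex.mul_re, Complex.zero_re]
        linear_combination (r * r) * hu - (r * r) * hv
      · simp only [Fin.sum_univ_three, pow_two, Complex.add_im, Complex.mul_im, Complex.zero_im]
        linear_combination 2 * (r * r) * huv
    · ext i j
      have hij := congrArg (fun M : Matrix (Fin 3) (Fin 3) ℝ => M i j) h
      simp only [Matrix.smul_apply, Matrix.add_apply, vecMulVec_apply, smul_eq_mul] at hij
      rw [Matrix.map_apply, of_apply]
      simp only [Complex.mul_re, Complex.conj_re, Complex.conj_im]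
      linear_combination (1 / 2) * hij - (u i * u j + v i * v j) * hr
end

section
/- (Theorem A′, case n = 1: the image of the projection π₁ on CP² is Σ₀.) The set { Re(X(x)) : x ∈ ℂ³, ∑ᵢ ‖x i‖² = 1 } is exactly Σ₀ = { S : 3×3 real symmetric matrix | S is positive semidefinite, tr S = 1, and det S = 0 }. -/
/-!
Writing `x = a + i b` with `a, b` real, `Re (x i * conj (x j)) = a i * a j + b i * b j`. So the real
parts of the matrices `X(x)` are the sums `a aᵀ + b bᵀ` of two real rank-one Gram matrices, with
`∑ i, ‖x i‖ ^ 2` as their trace. Such a sum is positive semidefinite of rank at most two, hence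
singular in size three. Conversely, a singular positive semidefinite `3 × 3` matrix has a zero
eigenvalue, and the spectral theorem writes it as `a aᵀ + b bᵀ`, where `a` and `b` are the two other
eigenvectors scaled by the square roots of their eigenvalues
(`exists_eq_add_vecMulVec_of_det_eq_zero`).
-/

open Matrix in
theorem map_re_eq_add_vecMulVec (x : Fin 3 → ℂ) :
    (Matrix.of fun i j => x i * starRingEnd ℂ (x j)).map Complex.re
      = vecMulVec (fun i => (x i).re) (fun i => (x i).re)
        + vecMulVec (fun i => (x i).im) (fun i => (x i).im) := by
  ext i j
  simp [vecMulVec_apply]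

open Matrix in
theorem trace_add_vecMulVec (x : Fin 3 → ℂ) :
    (vecMulVec (fun i => (x i).re) (fun i => (x i).re)
      + vecMulVec (fun i => (x i).im) (fun i => (x i).im)).trace = ∑ i, ‖x i‖ ^ 2 := by
  simp only [Complex.sq_norm, Complex.normSq_apply, Matrix.trace, Matrix.diag_apply,
    Matrix.add_apply, vecMulVec_apply]

open Matrix in
theorem exists_eq_add_vecMulVec_of_det_eq_zero {S : Matrix (Fin 3) (Fin 3) ℝ}
    (hS : S.PosSemidef) (hdet : S.det = 0) :
    ∃ a b : Fin 3 → ℝ, S = vecMulVec a a + vecMulVec b b := by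
  have hH := hS.isHermitian
  have hspec : ∀ i j, S i j = ∑ k, hH.eigenvectorUnitary.1 i k * hH.eigenvalues k *
      hH.eigenvectorUnitary.1 j k := by
    intro i j
    conv_lhs => rw [hH.spectral_theorem]
    simp [Unitary.conjStarAlgAut_apply, Matrix.mul_apply, Matrix.diagonal_apply,
      Matrix.star_apply]
  have hsqrt : ∀ k, √(hH.eigenvalues k) * √(hH.eigenvalues k) = hH.eigenvalues k :=
    fun k => Real.mul_self_sqrt (hS.eigenvalues_nonneg k)
  obtain ⟨k, hk⟩ : ∃ k, hH.eigenvalues k = 0 := by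
    have h := hH.det_eq_prod_eigenvalues
    rw [hdet, eq_comm, Finset.prod_eq_zero_iff] at h
    obtain ⟨k, -, hk⟩ := h
    exact ⟨k, by simpa using hk⟩
  -- In `Fin 3`, the two indices other than `k` are `k + 1` and `k + 2`.
  refine ⟨fun i => √(hH.eigenvalues (k + 1)) * hH.eigenvectorUnitary.1 i (k + 1),
    fun i => √(hH.eigenvalues (k + 2)) * hH.eigenvectorUnitary.1 i (k + 2), ?_⟩
  ext i j
  have hsum : ∀ f : Fin 3 → ℝ, ∑ l, f l = f k + f (k + 1) + f (k + 2) := by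
    intro f
    rw [← Equiv.sum_comp (Equiv.addLeft k) f, Fin.sum_univ_three]
    simp
  rw [hspec, hsum, hk]
  simp only [Matrix.add_apply, vecMulVec_apply]
  linear_combination
    -hH.eigenvectorUnitary.1 i (k + 1) * hH.eigenvectorUnitary.1 j (k + 1) * hsqrt (k + 1)
    - hH.eigenvectorUnitary.1 i (k + 2) * hH.eigenvectorUnitary.1 j (k + 2) * hsqrt (k + 2)

/-- Theorem A′ for `n = 1`: the image of `CP²` (in the projection-matrix model) under
entrywise real part is exactly `Σ₀`, the set of real symmetric positive semidefinite
matrices of trace `1` and determinant `0`. -/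
theorem theoremA'_n1 :
    { S : Matrix (Fin 3) (Fin 3) ℝ | ∃ x : Fin 3 → ℂ,
        (∑ i, ‖x i‖ ^ 2) = 1 ∧
        S = (Matrix.of fun i j => x i * starRingEnd ℂ (x j)).map Complex.re }
      = { S : Matrix (Fin 3) (Fin 3) ℝ |
          S.PosSemidef ∧ S.trace = 1 ∧ S.det = 0 } := by
  ext S
  simp only [Set.mem_ofPred_eq]
  constructor
  · rintro ⟨x, hx, rfl⟩
    rw [map_re_eq_add_vecMulVec]
    refine ⟨?_, by rw [trace_add_vecMulVec, hx], ?_⟩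
    · have h (a : Fin 3 → ℝ) : (Matrix.vecMulVec a a).PosSemidef := by
        simpa using Matrix.posSemidef_vecMulVec_self_star a
      exact (h _).add (h _)
    · simp only [Matrix.det_fin_three, Matrix.add_apply, Matrix.vecMulVec_apply]
      ring
  · rintro ⟨hS, htr, hdet⟩
    obtain ⟨a, b, rfl⟩ := exists_eq_add_vecMulVec_of_det_eq_zero hS hdet
    refine ⟨fun i => ⟨a i, b i⟩, ?_, ?_⟩
    · rw [← trace_add_vecMulVec]
      exact htr
    · rw [map_re_eq_add_vecMulVec]
end

section
/- (Theorem A′, case n = 2: the image of the projection π₂ on HP² is Σ₁.) The set { c(X(x)) : x ∈ ℍ³, ∑ᵢ ‖x i‖² = 1 } is exactly Σ₁ = { M : 3×3 complex Hermitian matrix | M is positive semidefinite, tr M = 1, and det M = 0 }. -/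
/-!
Writing `x i = u i + v i j` with `u i, v i ∈ ℂ`, the complex part of `x i * star (x j)` is
`u i * conj (u j) + v i * conj (v j)`. So the image consists of the matrices `u uᴴ + v vᴴ` with
`‖u‖² + ‖v‖² = 1`: positive semidefinite of rank at most `2` and trace `1`. Conversely, a positive
semidefinite matrix with vanishing determinant has a zero eigenvalue, so its spectral
decomposition expresses it as a sum of two such rank-one terms.
-/

open scoped Quaternion ComplexOrder

/-- The complex part of a quaternion `q = a + b i + c j + d k`, namely `a + b i ∈ ℂ`. -/
def Quaternion.cpart (q : ℍ[ℝ]) : ℂ := ⟨q.re, q.imI⟩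

/-- The quaternion `u + v j` with complex components `u` and `v`. -/
def quatOfComplexPair (u v : ℂ) : ℍ[ℝ] := ⟨u.re, u.im, v.re, v.im⟩

lemma exists_quatOfComplexPair (q : ℍ[ℝ]) : ∃ u v : ℂ, q = quatOfComplexPair u v :=
  ⟨⟨q.re, q.imI⟩, ⟨q.imJ, q.imK⟩, rfl⟩

lemma cpart_quatOfComplexPair_mul_star (u v s t : ℂ) :
    (quatOfComplexPair u v * star (quatOfComplexPair s t)).cpart = u * star s + v * star t := by
  apply Complex.ext
  · simp only [Quaternion.cpart, Quaternion.re_mul, Quaternion.re_star, Quaternion.imI_star,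
      Quaternion.imJ_star, Quaternion.imK_star]
    simp [quatOfComplexPair]
    ring
  · simp only [Quaternion.cpart, Quaternion.imI_mul, Quaternion.re_star, Quaternion.imI_star,
      Quaternion.imJ_star, Quaternion.imK_star]
    simp [quatOfComplexPair]
    ring

lemma cpart_self_mul_star (q : ℍ[ℝ]) : (q * star q).cpart = ((‖q‖ ^ 2 : ℝ) : ℂ) := by
  rw [Quaternion.self_mul_star, Quaternion.normSq_eq_norm_mul_self, ← sq]
  rfl

/-- Rank-two form of a singular positive semidefinite matrix: the spectral decomposition, with
each eigenvector scaled by the square root of its eigenvalue and a null eigenvector dropped. -/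
lemma exists_rank_two_decomposition {M : Matrix (Fin 3) (Fin 3) ℂ} (hM : M.PosSemidef)
    (hdet : M.det = 0) :
    ∃ u v : Fin 3 → ℂ, ∀ i j, M i j = u i * star (u j) + v i * star (v j) := by
  have hH := hM.isHermitian
  obtain ⟨k, hk⟩ : ∃ k, hH.eigenvalues k = 0 := by
    rw [hH.det_eq_prod_eigenvalues, Finset.prod_eq_zero_iff] at hdet
    obtain ⟨k, -, hk⟩ := hdet
    exact ⟨k, Complex.ofReal_eq_zero.mp hk⟩
  let U : Matrix (Fin 3) (Fin 3) ℂ := hH.eigenvectorUnitary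
  let c : Fin 3 → Fin 3 → ℂ := fun l i => U i l * (Real.sqrt (hH.eigenvalues l) : ℂ)
  have hsum (i j : Fin 3) : M i j = ∑ l, c l i * star (c l j) := by
    have h := congrFun (congrFun hH.spectral_theorem i) j
    rw [Unitary.conjStarAlgAut_apply, Matrix.mul_apply] at h
    rw [h]
    refine Finset.sum_congr rfl fun l _ => ?_
    have hs : ((hH.eigenvalues l : ℝ) : ℂ) =
        (Real.sqrt (hH.eigenvalues l) : ℂ) * (Real.sqrt (hH.eigenvalues l) : ℂ) := by
      rw [← Complex.ofReal_mul, Real.mul_self_sqrt (hM.eigenvalues_nonneg l)]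
    rw [Matrix.mul_diagonal]
    simp only [c, U, Function.comp_apply, star_mul', Matrix.star_apply]
    simp only [RCLike.star_def, Complex.conj_ofReal, Complex.coe_algebraMap]
    change _ * ((hH.eigenvalues l : ℝ) : ℂ) * _ = _
    rw [hs]
    ring
  have hc (i : Fin 3) : c k i = 0 := by simp [c, hk]
  refine ⟨c (k + 1), c (k + 2), fun i j => ?_⟩
  rw [hsum, ← Equiv.sum_comp (Equiv.addLeft k), Fin.sum_univ_three]
  simp [hc]

/-- Theorem A′ for `n = 2`: the image of `HP²` (in the projection-matrix model) under
entrywise complex part is exactly `Σ₁`, the set of complex Hermitian positive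
semidefinite matrices of trace `1` and determinant `0`. -/
theorem theoremA'_n2 :
    { M : Matrix (Fin 3) (Fin 3) ℂ | ∃ x : Fin 3 → ℍ[ℝ],
        (∑ i, ‖x i‖ ^ 2) = 1 ∧
        M = (Matrix.of fun i j => x i * star (x j)).map Quaternion.cpart }
      = { M : Matrix (Fin 3) (Fin 3) ℂ |
          M.IsHermitian ∧ M.PosSemidef ∧ M.trace = 1 ∧ M.det = 0 } := by
  have htrace (x : Fin 3 → ℍ[ℝ]) :
      ((Matrix.of fun i j => x i * star (x j)).map Quaternion.cpart).trace
        = ((∑ i, ‖x i‖ ^ 2 : ℝ) : ℂ) := by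
    simp only [Matrix.trace, Matrix.diag_apply, Matrix.map_apply, Matrix.of_apply,
      cpart_self_mul_star, Complex.ofReal_sum]
  ext M
  constructor
  · rintro ⟨x, hx, rfl⟩
    choose u v huv using fun i => exists_quatOfComplexPair (x i)
    -- The zero third column makes the factor square, so that its determinant is available.
    let B : Matrix (Fin 3) (Fin 3) ℂ := Matrix.of fun i => ![u i, v i, 0]
    have hB : (Matrix.of fun i j => x i * star (x j)).map Quaternion.cpart
        = B * B.conjTranspose := by
      ext i j
      simp only [Matrix.map_apply, Matrix.of_apply, huv, cpart_quatOfComplexPair_mul_star]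
      simp [Matrix.mul_apply, Fin.sum_univ_three, B]
    have hP := Matrix.posSemidef_self_mul_conjTranspose B
    refine ⟨hB ▸ hP.isHermitian, hB ▸ hP, ?_, ?_⟩
    · rw [htrace, hx, Complex.ofReal_one]
    · have hdet : B.det = 0 := Matrix.det_eq_zero_of_column_eq_zero 2 fun i => by simp [B]
      rw [hB, Matrix.det_mul, hdet, zero_mul]
  · rintro ⟨-, hM, htr, hdet⟩
    obtain ⟨u, v, huv⟩ := exists_rank_two_decomposition hM hdet
    have hMx : M = (Matrix.of fun i j => quatOfComplexPair (u i) (v i) *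
        star (quatOfComplexPair (u j) (v j))).map Quaternion.cpart := by
      ext i j
      simp only [Matrix.map_apply, Matrix.of_apply, cpart_quatOfComplexPair_mul_star, huv]
    refine ⟨fun i => quatOfComplexPair (u i) (v i), ?_, hMx⟩
    rw [hMx, htrace] at htr
    exact_mod_cast htr
end

section
/- (Lemma 1, case n = 1.) For every unit vector x ∈ ℂ³ (∑ᵢ ‖x i‖² = 1), the entrywise real part of the matrix X(x) is not equal to (1/3)·I; that is, Re(X(x)) ≠ (1/3)I. -/
/-! If `x = a + i b` with `a, b` real, then `Re X(x) = a aᵀ + b bᵀ` has rank at most two, so its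
determinant vanishes, whereas `det ((1/3) I) = 1/27`. -/

/-- Lemma 1 for `n = 1`: for a unit vector `x ∈ ℂ³`, the entrywise real part of
`X(x) i j = x i * conj (x j)` is not `(1/3) I`. -/
theorem lemma1_n1 (x : Fin 3 → ℂ) (hx : (∑ i, ‖x i‖ ^ 2) = 1) :
    (Matrix.of fun i j => x i * starRingEnd ℂ (x j)).map Complex.re
      ≠ ((1 : ℝ)/3) • (1 : Matrix (Fin 3) (Fin 3) ℝ) := by
  intro h
  have hdet : ((Matrix.of fun i j => x i * starRingEnd ℂ (x j)).map Complex.re).det = 0 := by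
    simp [Matrix.det_fin_three]
    ring
  rw [h] at hdet
  norm_num [Matrix.det_smul] at hdet
end

section
/- (Lemma 1, case n = 2.) For every unit vector x ∈ ℍ³ over the quaternions (∑ᵢ ‖x i‖² = 1), the entrywise complex part of the matrix X(x) is not equal to (1/3)·I; that is, c(X(x)) ≠ (1/3)I. -/
/-!
Write `x i = z i + w i * j` with `z i, w i ∈ ℂ`. The complex part of `x i * star (x j)` is
`z i * conj (z j) + w i * conj (w j)`, so the matrix of complex parts is `M * Mᴴ`, where `M` is the
`3 × 2` complex matrix with columns `z` and `w` (`map_cpart_eq_mul_conjTranspose`). It has rank at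
most `2`, whereas `(1/3) I` has rank `3`.
-/

open scoped Quaternion

/-- The `ι × 2` complex matrix whose `i`-th row is the pair `(z, w)` with `x i = z + w * j`,
that is `z = a + b i` and `w = c + d i` for `x i = a + b i + c j + d k`. -/
def complexCoords {ι : Type*} (x : ι → ℍ[ℝ]) : Matrix ι (Fin 2) ℂ :=
  Matrix.of fun i => ![(x i).cpart, ⟨(x i).imJ, (x i).imK⟩]

lemma map_cpart_eq_mul_conjTranspose {ι : Type*} (x : ι → ℍ[ℝ]) :
    (Matrix.of fun i j => x i * star (x j)).map Quaternion.cpart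
      = complexCoords x * (complexCoords x).conjTranspose := by
  ext i j
  apply Complex.ext <;>
    simp [complexCoords, Quaternion.cpart, Matrix.mul_apply] <;> ring

/-- Lemma 1 for `n = 2`: for a unit vector `x ∈ ℍ³`, the entrywise complex part of
`X(x) i j = x i * conj (x j)` is not `(1/3) I`. -/
theorem lemma1_n2 (x : Fin 3 → ℍ[ℝ]) (hx : (∑ i, ‖x i‖ ^ 2) = 1) :
    (Matrix.of fun i j => x i * star (x j)).map Quaternion.cpart
      ≠ ((1 : ℝ)/3) • (1 : Matrix (Fin 3) (Fin 3) ℂ) := by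
  intro h
  rw [map_cpart_eq_mul_conjTranspose] at h
  have hle := (Matrix.rank_mul_le_left (complexCoords x) (complexCoords x).conjTranspose).trans
    (Matrix.rank_le_width _)
  have hunit : IsUnit (((1 : ℝ)/3) • (1 : Matrix (Fin 3) (Fin 3) ℂ)) := by
    rw [Matrix.isUnit_iff_isUnit_det]
    simp
  rw [h, Matrix.rank_of_isUnit _ hunit] at hle
  simp at hle
end

section
/- (Lemma 3, case n = 0.) The set Λ₀⁺ = { S : 3×3 real symmetric matrix | S is positive definite and tr S = 1 } is a convex subset of the real vector space of 3×3 real matrices, and its boundary Σ₀ = { S : 3×3 real symmetric matrix | S is positive semidefinite, tr S = 1, and det S = 0 }, topologized as a subspace of the 3×3 real matrices, is homeomorphic to the 4-dimensional sphere (the unit sphere in EuclideanSpace ℝ (Fin 5)). -/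
/-!
The trace-one symmetric matrices form a 5-dimensional affine space, parametrised here by
`SpectralSphere.mat`, with origin at `I/3`. In these coordinates the positive semidefinite
matrices form a closed, bounded, convex body `SpectralSphere.body`. Its frontier is exactly the
locus `det = 0`: positive definiteness is an open condition (compactness of the unit sphere of
test vectors), while a singular semidefinite matrix with kernel vector `v` becomes negative on `v`
when pushed radially away from `I/3`. The frontier of a bounded convex body with an interior point
is homeomorphic to the unit sphere by radial rescaling
(`exists_homeomorph_image_interior_closure_frontier_eq_unitBall`).
-/

open Matrix Topology

namespace SpectralSphere

/-- Affine coordinates on symmetric `3 × 3` matrices of trace `1`, centred at `I/3`: the first two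
coordinates determine the diagonal, the last three are the off-diagonal entries. -/
noncomputable def mat (x : EuclideanSpace ℝ (Fin 5)) : Matrix (Fin 3) (Fin 3) ℝ :=
  !![1/3 + x 0, x 2, x 3; x 2, 1/3 + x 1, x 4; x 3, x 4, 1/3 - x 0 - x 1]

/-- The positive semidefinite matrices of trace `1`, in the coordinates `mat`. -/
def body : Set (EuclideanSpace ℝ (Fin 5)) := {x | (mat x).PosSemidef}

lemma mat_isHermitian (x : EuclideanSpace ℝ (Fin 5)) : (mat x).IsHermitian := by
  ext i j
  fin_cases i <;> fin_cases j <;> simp [mat]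

lemma mat_trace (x : EuclideanSpace ℝ (Fin 5)) : (mat x).trace = 1 := by
  simp [mat, Matrix.trace, Fin.sum_univ_three]
  ring

lemma continuous_mat : Continuous mat := by
  refine continuous_matrix fun i j ↦ ?_
  fin_cases i <;> fin_cases j <;> simp [mat] <;> fun_prop

lemma quad_expand (x : EuclideanSpace ℝ (Fin 5)) (v : Fin 3 → ℝ) :
    v ⬝ᵥ mat x *ᵥ v = (1/3 + x 0) * v 0 ^ 2 + (1/3 + x 1) * v 1 ^ 2
      + (1/3 - x 0 - x 1) * v 2 ^ 2
      + 2 * x 2 * v 0 * v 1 + 2 * x 3 * v 0 * v 2 + 2 * x 4 * v 1 * v 2 := by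
  simp [mat, dotProduct, mulVec, Fin.sum_univ_three]
  ring

lemma continuous_quad :
    Continuous fun p : EuclideanSpace ℝ (Fin 5) × (Fin 3 → ℝ) ↦ p.2 ⬝ᵥ mat p.1 *ᵥ p.2 := by
  simp only [quad_expand]
  fun_prop

lemma mem_body {x : EuclideanSpace ℝ (Fin 5)} :
    x ∈ body ↔ ∀ v : Fin 3 → ℝ, 0 ≤ v ⬝ᵥ mat x *ᵥ v := by
  simp only [body, Set.mem_ofPred_eq, posSemidef_iff_dotProduct_mulVec, mat_isHermitian, star_trivial,
    true_and]

lemma isClosed_body : IsClosed body := by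
  have : body = ⋂ v : Fin 3 → ℝ, {x | 0 ≤ v ⬝ᵥ mat x *ᵥ v} := by
    ext x
    simp [mem_body]
  rw [this]
  exact isClosed_iInter fun v ↦
    isClosed_le continuous_const (continuous_quad.comp (.prodMk_left v))

lemma convex_body : Convex ℝ body := by
  intro x hx y hy a b ha hb hab
  rw [mem_body] at *
  intro v
  have h := add_nonneg (mul_nonneg ha (hx v)) (mul_nonneg hb (hy v))
  have e : v ⬝ᵥ mat (a • x + b • y) *ᵥ v
      = a * (v ⬝ᵥ mat x *ᵥ v) + b * (v ⬝ᵥ mat y *ᵥ v) := by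
    obtain rfl : b = 1 - a := by linarith
    simp only [quad_expand, PiLp.add_apply, PiLp.smul_apply, smul_eq_mul]
    ring
  rwa [e]

lemma isBounded_body : Bornology.IsBounded body := by
  refine (Metric.isBounded_closedBall (x := (0 : EuclideanSpace ℝ (Fin 5))) (r := 3)).subset ?_
  intro x hx
  rw [mem_body] at hx
  have q (a b c : ℝ) := hx ![a, b, c]
  simp only [quad_expand, Matrix.cons_val_zero, Matrix.cons_val_one, Matrix.cons_val] at q
  -- Evaluating the form at `eᵢ` bounds the diagonal, and at `eᵢ ± eⱼ` the off-diagonal entries.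
  have h0 := q 1 0 0
  have h1 := q 0 1 0
  have h2 := q 0 0 1
  have h3 := q 1 1 0
  have h4 := q 1 (-1) 0
  have h5 := q 1 0 1
  have h6 := q 1 0 (-1)
  have h7 := q 0 1 1
  have h8 := q 0 1 (-1)
  have sq {t : ℝ} (h : -1 ≤ t) (h' : t ≤ 1) : t ^ 2 ≤ 1 := by nlinarith
  have e0 : x 0 ^ 2 ≤ 1 := sq (by linarith) (by linarith)
  have e1 : x 1 ^ 2 ≤ 1 := sq (by linarith) (by linarith)
  have e2 : x 2 ^ 2 ≤ 1 := sq (by linarith) (by linarith)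
  have e3 : x 3 ^ 2 ≤ 1 := sq (by linarith) (by linarith)
  have e4 : x 4 ^ 2 ≤ 1 := sq (by linarith) (by linarith)
  have hn := EuclideanSpace.real_norm_sq_eq x
  rw [Fin.sum_univ_five] at hn
  rw [mem_closedBall_zero_iff]
  nlinarith [norm_nonneg x]

/-- Positive definiteness is an open condition in the coordinates `mat`. -/
lemma mem_interior_body_of_posDef {x : EuclideanSpace ℝ (Fin 5)} (hx : (mat x).PosDef) :
    x ∈ interior body := by
  rw [mem_interior_iff_mem_nhds]
  have key : ∀ᶠ y in 𝓝 x, ∀ v ∈ Metric.sphere (0 : Fin 3 → ℝ) 1, 0 < v ⬝ᵥ mat y *ᵥ v := by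
    refine (isCompact_sphere (0 : Fin 3 → ℝ) 1).eventually_forall_of_forall_eventually
      fun v hv ↦ ?_
    have hv0 : v ≠ 0 := by
      rintro rfl
      simp at hv
    have hp : 0 < v ⬝ᵥ mat x *ᵥ v := by simpa using hx.dotProduct_mulVec_pos hv0
    exact (continuous_quad.tendsto (x, v)).eventually (lt_mem_nhds hp)
  filter_upwards [key] with y hy
  refine mem_body.2 fun v ↦ ?_
  rcases eq_or_ne v 0 with rfl | hv
  · simp
  have h := (hy (‖v‖⁻¹ • v) (by simp [norm_smul, hv])).le
  simp only [mulVec_smul, dotProduct_smul, smul_dotProduct, smul_eq_mul, ← mul_assoc] at h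
  have hn : 0 < ‖v‖⁻¹ * ‖v‖⁻¹ := by positivity
  exact nonneg_of_mul_nonneg_right h hn

/-- A singular matrix is never interior: along the ray from the centre `I/3`, the form becomes
negative on a kernel vector immediately after the matrix is passed. -/
lemma det_ne_zero_of_mem_interior_body {x : EuclideanSpace ℝ (Fin 5)} (hx : x ∈ interior body) :
    (mat x).det ≠ 0 := by
  intro hdet
  obtain ⟨v, hv, hv0⟩ := exists_mulVec_eq_zero_iff.2 hdet
  rw [mem_interior_iff_mem_nhds] at hx
  have ht : Filter.Tendsto (fun t : ℝ ↦ (1 + t) • x) (𝓝[>] 0) (𝓝 x) := by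
    have : Continuous fun t : ℝ ↦ (1 + t) • x := by fun_prop
    simpa using (this.tendsto 0).mono_left nhdsWithin_le_nhds
  obtain ⟨t, hmem, htpos⟩ := ((ht.eventually hx).and self_mem_nhdsWithin).exists
  have h := mem_body.1 hmem v
  have e : v ⬝ᵥ mat ((1 + t) • x) *ᵥ v
      = (1 + t) * (v ⬝ᵥ mat x *ᵥ v) - t / 3 * (v ⬝ᵥ v) := by
    rw [quad_expand, quad_expand]
    simp only [PiLp.smul_apply, smul_eq_mul, dotProduct, Fin.sum_univ_three]
    ring
  have hvv : 0 < v ⬝ᵥ v := by simpa using dotProduct_star_self_pos_iff.2 hv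
  rw [e, hv0, dotProduct_zero] at h
  have htpos : 0 < t := htpos
  have : 0 < t / 3 * (v ⬝ᵥ v) := by positivity
  linarith

lemma mem_frontier_body {x : EuclideanSpace ℝ (Fin 5)} :
    x ∈ frontier body ↔ (mat x).PosSemidef ∧ (mat x).det = 0 := by
  rw [isClosed_body.frontier_eq]
  constructor
  · rintro ⟨h, hi⟩
    refine ⟨h, ?_⟩
    by_contra hdet
    refine hi (mem_interior_body_of_posDef ?_)
    exact (PosSemidef.posDef_iff_det_ne_zero h).2 hdet
  · rintro ⟨h, hdet⟩
    exact ⟨h, fun hi ↦ det_ne_zero_of_mem_interior_body hi hdet⟩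

lemma zero_mem_interior_body : (0 : EuclideanSpace ℝ (Fin 5)) ∈ interior body := by
  refine mem_interior_body_of_posDef (.of_dotProduct_mulVec_pos (mat_isHermitian 0) fun v hv ↦ ?_)
  have hvv : 0 < v ⬝ᵥ v := by simpa using dotProduct_star_self_pos_iff.2 hv
  rw [star_trivial, quad_expand]
  simp only [dotProduct, Fin.sum_univ_three] at hvv
  simp only [PiLp.zero_apply]
  linarith

/-- The coordinates of a matrix, inverse to `mat` on symmetric matrices of trace `1`. -/
noncomputable def coord (S : Matrix (Fin 3) (Fin 3) ℝ) : EuclideanSpace ℝ (Fin 5) :=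
  !₂[S 0 0 - 1/3, S 1 1 - 1/3, S 0 1, S 0 2, S 1 2]

lemma coord_mat (x : EuclideanSpace ℝ (Fin 5)) : coord (mat x) = x := by
  ext i
  fin_cases i <;> simp [coord, mat]

lemma mat_coord {S : Matrix (Fin 3) (Fin 3) ℝ} (hS : S.IsHermitian) (ht : S.trace = 1) :
    mat (coord S) = S := by
  have h01 : S 1 0 = S 0 1 := hS.apply 0 1
  have h02 : S 2 0 = S 0 2 := hS.apply 0 2
  have h12 : S 2 1 = S 1 2 := hS.apply 1 2
  rw [Matrix.trace_fin_three] at ht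
  ext i j
  fin_cases i <;> fin_cases j <;> simp [coord, mat, h01, h02, h12]
  linarith

lemma continuous_coord : Continuous coord := by
  refine (PiLp.continuous_toLp 2 _).comp (continuous_pi fun i ↦ ?_)
  fin_cases i <;> simp <;> fun_prop

/-- The coordinates identify `Σ₀` with the frontier of the convex body. -/
noncomputable def homeoFrontier :
    ↥{S : Matrix (Fin 3) (Fin 3) ℝ | S.PosSemidef ∧ S.trace = 1 ∧ S.det = 0} ≃ₜ
      ↥(frontier body) where
  toFun S := ⟨coord S, by
    obtain ⟨S, h, ht, hd⟩ := S
    rw [mem_frontier_body, mat_coord h.1 ht]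
    exact ⟨h, hd⟩⟩
  invFun x := ⟨mat x, (mem_frontier_body.1 x.2).1, mat_trace x, (mem_frontier_body.1 x.2).2⟩
  left_inv S := Subtype.ext (mat_coord S.2.1.1 S.2.2.1)
  right_inv x := Subtype.ext (coord_mat x)
  continuous_toFun := by exact (continuous_coord.comp continuous_subtype_val).subtype_mk _
  continuous_invFun := by exact (continuous_mat.comp continuous_subtype_val).subtype_mk _

lemma convex_posDef_trace_one :
    Convex ℝ {S : Matrix (Fin 3) (Fin 3) ℝ | S.PosDef ∧ S.trace = 1} := by
  refine convex_iff_forall_pos.2 ?_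
  rintro S ⟨hS, hSt⟩ T ⟨hT, hTt⟩ a b ha hb hab
  exact ⟨(hS.smul ha).add (hT.smul hb), by simp [hSt, hTt, hab]⟩

end SpectralSphere

/-- Lemma 3 for `n = 0`: the set `Λ₀⁺` of real symmetric positive definite matrices of
trace `1` is convex, and its boundary `Σ₀` (positive semidefinite, trace `1`,
determinant `0`) is homeomorphic to the 4-sphere. -/
theorem lemma3_n0 :
    Convex ℝ { S : Matrix (Fin 3) (Fin 3) ℝ | S.PosDef ∧ S.trace = 1 } ∧
    Nonempty
      (↥{ S : Matrix (Fin 3) (Fin 3) ℝ | S.PosSemidef ∧ S.trace = 1 ∧ S.det = 0 }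
        ≃ₜ Metric.sphere (0 : EuclideanSpace ℝ (Fin 5)) 1) := by
  refine ⟨SpectralSphere.convex_posDef_trace_one, ?_⟩
  obtain ⟨h, -, -, hf⟩ := exists_homeomorph_image_interior_closure_frontier_eq_unitBall
    SpectralSphere.convex_body ⟨0, SpectralSphere.zero_mem_interior_body⟩
    SpectralSphere.isBounded_body
  exact ⟨SpectralSphere.homeoFrontier.trans ((h.image _).trans (.setCongr hf))⟩
end

section
/- (Lemma 3, case n = 1.) The set Λ₁⁺ = { M : 3×3 complex Hermitian matrix | M is positive definite and tr M = 1 } is a convex subset (over ℝ) of the 3×3 complex matrices, and its boundary Σ₁ = { M : 3×3 complex Hermitian matrix | M is positive semidefinite, tr M = 1, and det M = 0 }, topologized as a subspace of the 3×3 complex matrices, is homeomorphic to the 7-dimensional sphere (the unit sphere in EuclideanSpace ℝ (Fin 8)). -/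
/-!
The traceless Hermitian `3 × 3` matrices form a real vector space of dimension `8`, and
`densityMatrix` identifies `EuclideanSpace ℝ (Fin 8)` with the affine space of Hermitian matrices of
trace `1`, sending the origin to the positive definite matrix `1/3`. Under this identification the
positive semidefinite matrices become a closed bounded convex set `densityBody`. Its interior
consists of the positive definite matrices: positive definiteness is an open condition
(`eventually_posDef`), and conversely an interior point lies strictly between the origin and another
point of the body, hence is a sum of a positive definite and a positive semidefinite matrix
(`interior_densityBody`). A positive semidefinite matrix is positive definite iff its determinant is
nonzero, so `Σ₁` corresponds to the frontier of the body. The frontier of a bounded convex set with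
nonempty interior is mapped to the unit sphere by the gauge-rescaling homeomorphism of the ambient
space.
-/

open scoped ComplexOrder

open Matrix Topology

/-- The Hermitian matrix of trace `1` with real coordinates `x`: `x 0` and `x 1` are the deviations
of the first two diagonal entries from `1/3`, and `x 2, …, x 7` are the real and imaginary parts of
the entries above the diagonal. -/
noncomputable def densityMatrix (x : EuclideanSpace ℝ (Fin 8)) : Matrix (Fin 3) (Fin 3) ℂ :=
  !![⟨1 / 3 + x 0, 0⟩, ⟨x 2, x 3⟩, ⟨x 4, x 5⟩;
     ⟨x 2, -x 3⟩, ⟨1 / 3 + x 1, 0⟩, ⟨x 6, x 7⟩;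
     ⟨x 4, -x 5⟩, ⟨x 6, -x 7⟩, ⟨1 / 3 - x 0 - x 1, 0⟩]

/-- The coordinates of a matrix, a left inverse of `densityMatrix`. -/
noncomputable def densityCoords (M : Matrix (Fin 3) (Fin 3) ℂ) : EuclideanSpace ℝ (Fin 8) :=
  !₂[(M 0 0).re - 1 / 3, (M 1 1).re - 1 / 3, (M 0 1).re, (M 0 1).im, (M 0 2).re, (M 0 2).im,
    (M 1 2).re, (M 1 2).im]

/-- The convex body of positive semidefinite matrices of trace `1`, in coordinates. -/
def densityBody : Set (EuclideanSpace ℝ (Fin 8)) := {x | (densityMatrix x).PosSemidef}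

lemma isHermitian_densityMatrix (x : EuclideanSpace ℝ (Fin 8)) :
    (densityMatrix x).IsHermitian := by
  ext i j
  fin_cases i <;> fin_cases j <;> simp [densityMatrix, Complex.ext_iff]

lemma trace_densityMatrix (x : EuclideanSpace ℝ (Fin 8)) : (densityMatrix x).trace = 1 := by
  apply Complex.ext
  · simp [densityMatrix, Matrix.trace, Fin.sum_univ_three]
    ring
  · simp [densityMatrix, Matrix.trace, Fin.sum_univ_three]

lemma densityCoords_densityMatrix (x : EuclideanSpace ℝ (Fin 8)) :
    densityCoords (densityMatrix x) = x := by
  ext i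
  fin_cases i <;> simp [densityMatrix, densityCoords]

lemma densityMatrix_densityCoords {M : Matrix (Fin 3) (Fin 3) ℂ} (hM : M.IsHermitian)
    (ht : M.trace = 1) : densityMatrix (densityCoords M) = M := by
  have h (i j) : star (M j i) = M i j := hM.apply i j
  have hr (i j) : (M j i).re = (M i j).re := by simpa using congrArg Complex.re (h i j)
  have hi (i j) : -(M j i).im = (M i j).im := by simpa using congrArg Complex.im (h i j)
  have htr : (M 0 0).re + (M 1 1).re + (M 2 2).re = 1 := by
    simpa [Matrix.trace, Fin.sum_univ_three] using congrArg Complex.re ht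
  have h0 := hi 0 0
  have h1 := hi 1 1
  have h2 := hi 2 2
  have h3 := hi 1 0
  have h4 := hi 2 0
  have h5 := hi 2 1
  have h6 := hr 1 0
  have h7 := hr 2 0
  have h8 := hr 2 1
  ext i j
  fin_cases i <;> fin_cases j <;> apply Complex.ext <;>
    simp [densityMatrix, densityCoords] <;> linarith

lemma densityMatrix_combo (x y : EuclideanSpace ℝ (Fin 8)) {a b : ℝ} (hab : a + b = 1) :
    densityMatrix (a • x + b • y) = a • densityMatrix x + b • densityMatrix y := by
  obtain rfl : b = 1 - a := by linarith
  ext i j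
  fin_cases i <;> fin_cases j <;> apply Complex.ext <;> simp [densityMatrix] <;> ring

lemma densityMatrix_zero : densityMatrix 0 = (1 / 3 : ℝ) • (1 : Matrix (Fin 3) (Fin 3) ℂ) := by
  ext i j
  fin_cases i <;> fin_cases j <;> simp [densityMatrix, Complex.ext_iff]

lemma continuous_densityMatrix : Continuous densityMatrix := by
  refine continuous_matrix fun i j => ?_
  have hc {f g : EuclideanSpace ℝ (Fin 8) → ℝ} (hf : Continuous f) (hg : Continuous g) :
      Continuous fun x => (⟨f x, g x⟩ : ℂ) :=
    Complex.equivRealProdCLM.symm.continuous.comp (hf.prodMk hg)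
  fin_cases i <;> fin_cases j <;> exact hc (by fun_prop) (by fun_prop)

lemma continuous_densityCoords : Continuous densityCoords := by
  refine (PiLp.continuous_toLp 2 _).comp (continuous_pi fun i => ?_)
  have hr (i j : Fin 3) : Continuous fun M : Matrix (Fin 3) (Fin 3) ℂ => (M i j).re :=
    Complex.continuous_re.comp (continuous_id.matrix_elem i j)
  have hi (i j : Fin 3) : Continuous fun M : Matrix (Fin 3) (Fin 3) ℂ => (M i j).im :=
    Complex.continuous_im.comp (continuous_id.matrix_elem i j)
  fin_cases i
  exacts [(hr 0 0).sub continuous_const, (hr 1 1).sub continuous_const, hr 0 1, hi 0 1, hr 0 2,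
    hi 0 2, hr 1 2, hi 1 2]

lemma posDef_densityMatrix_zero : (densityMatrix 0).PosDef := by
  rw [densityMatrix_zero]
  exact PosDef.one.smul (by norm_num)

lemma re_form_smul (M : Matrix (Fin 3) (Fin 3) ℂ) (r : ℝ) (v : Fin 3 → ℂ) :
    (star (r • v) ⬝ᵥ (M *ᵥ (r • v))).re = r ^ 2 * (star v ⬝ᵥ (M *ᵥ v)).re := by
  rw [mulVec_smul, dotProduct_smul, star_smul, smul_dotProduct]
  simp
  ring

lemma Matrix.IsHermitian.form_eq_re {M : Matrix (Fin 3) (Fin 3) ℂ} (hM : M.IsHermitian)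
    (v : Fin 3 → ℂ) : star v ⬝ᵥ (M *ᵥ v) = ((star v ⬝ᵥ (M *ᵥ v)).re : ℂ) :=
  Complex.ext (by simp) (by simpa using hM.im_star_dotProduct_mulVec_self v)

/-- Positive definiteness is an open condition on the coordinates: it suffices that the quadratic
form is positive on the unit sphere, which is compact. -/
lemma eventually_posDef {x : EuclideanSpace ℝ (Fin 8)} (hx : (densityMatrix x).PosDef) :
    ∀ᶠ y in 𝓝 x, (densityMatrix y).PosDef := by
  have hK : IsCompact (Metric.sphere (0 : Fin 3 → ℂ) 1) := isCompact_sphere _ _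
  have hcont : Continuous fun p : EuclideanSpace ℝ (Fin 8) × (Fin 3 → ℂ) =>
      (star p.2 ⬝ᵥ (densityMatrix p.1 *ᵥ p.2)).re := by
    refine Complex.continuous_re.comp ?_
    exact Continuous.dotProduct (by fun_prop)
      ((continuous_densityMatrix.comp continuous_fst).matrix_mulVec continuous_snd)
  have key : ∀ᶠ y in 𝓝 x, ∀ v ∈ Metric.sphere (0 : Fin 3 → ℂ) 1,
      0 < (star v ⬝ᵥ (densityMatrix y *ᵥ v)).re := by
    refine hK.eventually_forall_of_forall_eventually fun v hv => ?_
    have hv0 : v ≠ 0 := by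
      rintro rfl
      simp at hv
    exact hcont.continuousAt.eventually (lt_mem_nhds (hx.re_dotProduct_pos hv0))
  filter_upwards [key] with y hy
  refine .of_dotProduct_mulVec_pos (isHermitian_densityMatrix y) fun v hv => ?_
  rw [(isHermitian_densityMatrix y).form_eq_re, Complex.zero_lt_real]
  have hn : 0 < ‖v‖ := norm_pos_iff.2 hv
  have := hy (‖v‖⁻¹ • v) (by simp [norm_smul, hn.ne'])
  rw [re_form_smul] at this
  exact pos_of_mul_pos_right this (by positivity)

lemma convex_densityBody : Convex ℝ densityBody := by
  intro x hx y hy a b ha hb hab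
  simp only [densityBody, Set.mem_ofPred_eq] at *
  rw [densityMatrix_combo x y hab]
  exact (hx.smul ha).add (hy.smul hb)

lemma isClosed_densityBody : IsClosed densityBody := by
  have : densityBody = ⋂ v : Fin 3 → ℂ,
      {x | 0 ≤ (star v ⬝ᵥ (densityMatrix x *ᵥ v)).re} := by
    ext x
    simp only [densityBody, Set.mem_ofPred_eq, Set.mem_iInter]
    refine ⟨fun h v => h.re_dotProduct_nonneg v, fun h => ?_⟩
    refine .of_dotProduct_mulVec_nonneg (isHermitian_densityMatrix x) fun v => ?_
    rw [(isHermitian_densityMatrix x).form_eq_re, Complex.zero_le_real]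
    exact h v
  rw [this]
  refine isClosed_iInter fun v => isClosed_le continuous_const (Complex.continuous_re.comp ?_)
  exact continuous_const.dotProduct (continuous_densityMatrix.matrix_mulVec continuous_const)

/-- Testing the form on the vectors `eᵢ` and `eᵢ + c eⱼ` with `c ∈ {±1, ±i}` bounds every
coordinate. -/
lemma isBounded_densityBody : Bornology.IsBounded densityBody := by
  refine (Metric.isBounded_closedBall (x := (0 : EuclideanSpace ℝ (Fin 8))) (r := 3)).subset ?_
  intro x hx
  have h (v : Fin 3 → ℂ) : 0 ≤ (star v ⬝ᵥ (densityMatrix x *ᵥ v)).re :=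
    PosSemidef.re_dotProduct_nonneg hx v
  have a0 := h ![1, 0, 0]
  have a1 := h ![0, 1, 0]
  have a2 := h ![0, 0, 1]
  have b0 := h ![1, 1, 0]
  have b1 := h ![1, -1, 0]
  have b2 := h ![1, Complex.I, 0]
  have b3 := h ![1, -Complex.I, 0]
  have c0 := h ![1, 0, 1]
  have c1 := h ![1, 0, -1]
  have c2 := h ![1, 0, Complex.I]
  have c3 := h ![1, 0, -Complex.I]
  have d0 := h ![0, 1, 1]
  have d1 := h ![0, 1, -1]
  have d2 := h ![0, 1, Complex.I]
  have d3 := h ![0, 1, -Complex.I]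
  simp [densityMatrix, dotProduct, mulVec, Fin.sum_univ_three]
    at a0 a1 a2 b0 b1 b2 b3 c0 c1 c2 c3 d0 d1 d2 d3
  have hb (i : Fin 8) : x i ^ 2 ≤ 1 := by
    rw [sq_le_one_iff_abs_le_one, abs_le]
    fin_cases i <;> constructor <;> simp <;> linarith
  rw [mem_closedBall_zero_iff, EuclideanSpace.norm_eq, Real.sqrt_le_left (by norm_num)]
  calc ∑ i, ‖x i‖ ^ 2 ≤ ∑ _i : Fin 8, (1 : ℝ) := Finset.sum_le_sum fun i _ => by simpa using hb i
    _ ≤ 3 ^ 2 := by norm_num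

lemma interior_densityBody : interior densityBody = {x | (densityMatrix x).PosDef} := by
  ext x
  rw [mem_interior_iff_mem_nhds, Set.mem_ofPred_eq]
  refine ⟨fun hx => ?_, fun hx => (eventually_posDef hx).mono fun y hy => hy.posSemidef⟩
  have hc : Filter.Tendsto (fun t : ℝ => t • x) (𝓝[>] 1) (𝓝 x) := by
    have : Continuous fun t : ℝ => t • x := by fun_prop
    simpa using (this.tendsto 1).mono_left nhdsWithin_le_nhds
  obtain ⟨t, ht, ht1⟩ := ((hc.eventually hx).and self_mem_nhdsWithin).exists
  have ht1 : 1 < t := ht1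
  have ht0 : 0 < t := by linarith
  have e : densityMatrix x = t⁻¹ • densityMatrix (t • x) + (1 - t⁻¹) • densityMatrix 0 := by
    rw [← densityMatrix_combo _ _ (by ring)]
    simp [smul_smul, ht0.ne']
  rw [e]
  exact PosDef.posSemidef_add (PosSemidef.smul ht (by positivity))
    (posDef_densityMatrix_zero.smul (sub_pos.2 (inv_lt_one_of_one_lt₀ ht1)))

lemma frontier_densityBody :
    frontier densityBody = {x | (densityMatrix x).PosSemidef ∧ (densityMatrix x).det = 0} := by
  rw [isClosed_densityBody.frontier_eq, interior_densityBody]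
  ext x
  simp only [densityBody, Set.mem_sdiff, Set.mem_ofPred_eq]
  refine and_congr_right fun h => ?_
  rw [h.posDef_iff_det_ne_zero, not_not]

/-- Lemma 3 for `n = 1`: the set `Λ₁⁺` of complex Hermitian positive definite matrices
of trace `1` is convex (over `ℝ`), and its boundary `Σ₁` (Hermitian, positive
semidefinite, trace `1`, determinant `0`) is homeomorphic to the 7-sphere. -/
theorem lemma3_n1 :
    Convex ℝ { M : Matrix (Fin 3) (Fin 3) ℂ | M.IsHermitian ∧ M.PosDef ∧ M.trace = 1 } ∧
    Nonempty
      (↥{ M : Matrix (Fin 3) (Fin 3) ℂ |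
            M.IsHermitian ∧ M.PosSemidef ∧ M.trace = 1 ∧ M.det = 0 }
        ≃ₜ Metric.sphere (0 : EuclideanSpace ℝ (Fin 8)) 1) := by
  constructor
  · rw [convex_iff_forall_pos]
    rintro A ⟨-, hA, hAt⟩ B ⟨-, hB, hBt⟩ a b ha hb hab
    have hpd := (hA.smul ha).add (hB.smul hb)
    refine ⟨hpd.isHermitian, hpd, ?_⟩
    rw [trace_add, trace_smul, trace_smul, hAt, hBt, ← add_smul, hab, one_smul]
  · obtain ⟨h, -, -, hf⟩ := exists_homeomorph_image_interior_closure_frontier_eq_unitBall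
      convex_densityBody ⟨0, by rw [interior_densityBody]; exact posDef_densityMatrix_zero⟩
      isBounded_densityBody
    rw [frontier_densityBody] at hf
    have hmem (M : ↥{ M : Matrix (Fin 3) (Fin 3) ℂ |
            M.IsHermitian ∧ M.PosSemidef ∧ M.trace = 1 ∧ M.det = 0 }) :
        densityCoords M.1 ∈ {x | (densityMatrix x).PosSemidef ∧ (densityMatrix x).det = 0} := by
      obtain ⟨M, h1, h2, h3, h4⟩ := M
      simpa [densityMatrix_densityCoords h1 h3] using ⟨h2, h4⟩
    let e : ↥{ M : Matrix (Fin 3) (Fin 3) ℂ |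
            M.IsHermitian ∧ M.PosSemidef ∧ M.trace = 1 ∧ M.det = 0 } ≃ₜ
        ↥{x | (densityMatrix x).PosSemidef ∧ (densityMatrix x).det = 0} :=
      { toFun := fun M => ⟨densityCoords M.1, hmem M⟩
        invFun := fun x => ⟨densityMatrix x.1,
          isHermitian_densityMatrix _, x.2.1, trace_densityMatrix _, x.2.2⟩
        left_inv := fun M => Subtype.ext (densityMatrix_densityCoords M.2.1 M.2.2.2.1)
        right_inv := fun x => Subtype.ext (densityCoords_densityMatrix x.1)
        continuous_toFun := (continuous_densityCoords.comp continuous_subtype_val).subtype_mk hmem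
        continuous_invFun := (continuous_densityMatrix.comp continuous_subtype_val).subtype_mk _ }
    exact ⟨e.trans ((h.image _).trans (Homeomorph.setCongr hf))⟩
end

section
/- (Lemma 3, case n = 2.) Call a 3×3 quaternionic matrix M Hermitian if conj(M j i) = M i j for all i, j; positive semidefinite if for all v : Fin 3 → ℍ the real part of ∑ᵢⱼ conj(v i) * (M i j) * (v j) is ≥ 0; and positive definite if this real part is > 0 whenever v ≠ 0. Then the set Λ₂⁺ = { M Hermitian quaternionic | M positive definite and ∑ᵢ M i i = 1 } is a convex subset (over ℝ) of the 3×3 quaternionic matrices, and its boundary Σ₂ = { M Hermitian quaternionic | M positive semidefinite, ∑ᵢ M i i = 1, and M not positive definite }, topologized as a subspace of the 3×3 quaternionic matrices, is homeomorphic to the 13-dimensional sphere (the unit sphere in EuclideanSpace ℝ (Fin 14)). -/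
/-!
Convexity is immediate, since `Re (v* M v)` is real-linear in `M`. For the boundary, an affine chart
`toMat` identifies the Hermitian matrices of trace `1` with `ℝ¹⁴`. There the positive semidefinite
ones form a set `psdSet` that is convex, closed and bounded (`abs_coord_le`), and whose interior is
exactly the positive definite locus (`interior_psdSet`, resting on `isOpen_qPosDef` and on the
positive definiteness of the centre). Hence the matrices in question form the frontier of a convex
body in `ℝ¹⁴`, which gauge rescaling maps homeomorphically onto the unit sphere.
-/


open scoped Quaternion

/-- A `3 × 3` quaternionic matrix is Hermitian if it equals its conjugate transpose. -/
def QIsHerm (M : Matrix (Fin 3) (Fin 3) ℍ[ℝ]) : Prop :=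
  ∀ i j, star (M j i) = M i j

/-- A quaternionic matrix is positive semidefinite if `Re (v* M v) ≥ 0` for all `v`. -/
def QPosSemidef (M : Matrix (Fin 3) (Fin 3) ℍ[ℝ]) : Prop :=
  ∀ v : Fin 3 → ℍ[ℝ], 0 ≤ (∑ i, ∑ j, star (v i) * M i j * v j).re

/-- A quaternionic matrix is positive definite if `Re (v* M v) > 0` for all `v ≠ 0`. -/
def QPosDef (M : Matrix (Fin 3) (Fin 3) ℍ[ℝ]) : Prop :=
  ∀ v : Fin 3 → ℍ[ℝ], v ≠ 0 → 0 < (∑ i, ∑ j, star (v i) * M i j * v j).re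

/-- The real part of the sesquilinear form `v* M v`; `QPosSemidef` and `QPosDef` unfold to its
signs. -/
noncomputable def hForm (M : Matrix (Fin 3) (Fin 3) ℍ[ℝ]) (v : Fin 3 → ℍ[ℝ]) : ℝ :=
  (∑ i, ∑ j, star (v i) * M i j * v j).re

lemma hForm_combo (a b : ℝ) (M N : Matrix (Fin 3) (Fin 3) ℍ[ℝ]) (v : Fin 3 → ℍ[ℝ]) :
    hForm (a • M + b • N) v = a * hForm M v + b * hForm N v := by
  simp [hForm, Fin.sum_univ_three]
  ring

lemma hForm_smul_vec (r : ℝ) (M : Matrix (Fin 3) (Fin 3) ℍ[ℝ]) (v : Fin 3 → ℍ[ℝ]) :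
    hForm M (r • v) = r ^ 2 * hForm M v := by
  simp [hForm, Fin.sum_univ_three]
  ring

lemma continuous_hForm {X : Type*} [TopologicalSpace X] {f : X → Matrix (Fin 3) (Fin 3) ℍ[ℝ]}
    {g : X → Fin 3 → ℍ[ℝ]} (hf : Continuous f) (hg : Continuous g) :
    Continuous fun x => hForm (f x) (g x) := by
  unfold hForm
  refine Quaternion.continuous_re.comp ?_
  refine continuous_finsetSum _ fun i _ => continuous_finsetSum _ fun j _ => ?_
  have h : Continuous fun x => f x i j := hf.matrix_elem i j
  fun_prop

/-- By homogeneity, positive definiteness can be tested on the unit sphere (of the sup norm), which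
is compact. -/
lemma qPosDef_iff_sphere (M : Matrix (Fin 3) (Fin 3) ℍ[ℝ]) :
    QPosDef M ↔ ∀ v ∈ Metric.sphere (0 : Fin 3 → ℍ[ℝ]) 1, 0 < hForm M v := by
  constructor
  · intro hM v hv
    exact hM v (ne_zero_of_mem_unit_sphere ⟨v, hv⟩)
  · intro hM v hv
    have hn : 0 < ‖v‖ := norm_pos_iff.mpr hv
    have h := hM (‖v‖⁻¹ • v) (by rw [mem_sphere_zero_iff_norm, norm_smul, norm_inv, norm_norm,
      inv_mul_cancel₀ hn.ne'])
    rw [hForm_smul_vec] at h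
    exact pos_of_mul_pos_right h (by positivity)

/-- The complement is the image of the closed set `{(M, v) | hForm M v ≤ 0}` under the projection
along the compact unit sphere, hence closed. -/
lemma isOpen_qPosDef : IsOpen {M | QPosDef M} := by
  have : ProperSpace (Fin 3 → ℍ[ℝ]) := FiniteDimensional.proper ℝ _
  have : CompactSpace (Metric.sphere (0 : Fin 3 → ℍ[ℝ]) 1) :=
    isCompact_iff_compactSpace.mp (isCompact_sphere _ _)
  have hcl : IsClosed {p : Matrix (Fin 3) (Fin 3) ℍ[ℝ] × Metric.sphere (0 : Fin 3 → ℍ[ℝ]) 1 |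
      hForm p.1 p.2.1 ≤ 0} :=
    isClosed_le (continuous_hForm continuous_fst
      (continuous_subtype_val.comp continuous_snd)) continuous_const
  have h := (isClosedMap_fst_of_compactSpace _ hcl).isOpen_compl
  have e : {M | QPosDef M} = (Prod.fst '' {p : Matrix (Fin 3) (Fin 3) ℍ[ℝ] ×
      Metric.sphere (0 : Fin 3 → ℍ[ℝ]) 1 | hForm p.1 p.2.1 ≤ 0})ᶜ := by
    ext M
    rw [Set.mem_ofPred_eq, qPosDef_iff_sphere]
    constructor
    · rintro hM ⟨⟨N, v⟩, hv, rfl⟩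
      exact absurd (hM v.1 v.2) (not_lt.mpr hv)
    · intro hM v hv
      by_contra hneg
      exact hM ⟨⟨M, ⟨v, hv⟩⟩, not_lt.mp hneg, rfl⟩
  rw [e]
  exact h

/-- The coordinate space: the Hermitian `3 × 3` matrices of trace `1` form an affine space of real
dimension `2 + 3 * 4 = 14`. -/
abbrev E14 := EuclideanSpace ℝ (Fin 14)

/-- The quaternion with the given components, named so that `simp` can read off
its components. -/
def quat (a b c d : ℝ) : ℍ[ℝ] := ⟨a, b, c, d⟩

@[simp] lemma quat_re (a b c d : ℝ) : (quat a b c d).re = a := rfl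
@[simp] lemma quat_imI (a b c d : ℝ) : (quat a b c d).imI = b := rfl
@[simp] lemma quat_imJ (a b c d : ℝ) : (quat a b c d).imJ = c := rfl
@[simp] lemma quat_imK (a b c d : ℝ) : (quat a b c d).imK = d := rfl

lemma continuous_quat {X : Type*} [TopologicalSpace X] {a b c d : X → ℝ} (ha : Continuous a)
    (hb : Continuous b) (hc : Continuous c) (hd : Continuous d) :
    Continuous fun x => quat (a x) (b x) (c x) (d x) := by
  have h : Continuous fun x => (!₂[a x, b x, c x, d x] : EuclideanSpace ℝ (Fin 4)) := by
    refine (PiLp.continuous_toLp 2 _).comp (continuous_pi fun k => ?_)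
    fin_cases k <;> simpa
  exact Quaternion.linearIsometryEquivTuple.symm.continuous.comp h

/-- Affine parametrization of the Hermitian matrices of trace `1`, centred at `1/3` times the
identity. Coordinates `0, 1` give the diagonal, and `2–5`, `6–9`, `10–13` the components of the
entries `(0,1)`, `(0,2)`, `(1,2)`. -/
noncomputable def toMat (x : E14) : Matrix (Fin 3) (Fin 3) ℍ[ℝ] :=
  !![quat (1 / 3 + x 0) 0 0 0, quat (x 2) (x 3) (x 4) (x 5), quat (x 6) (x 7) (x 8) (x 9);
    quat (x 2) (-x 3) (-x 4) (-x 5), quat (1 / 3 + x 1) 0 0 0,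
      quat (x 10) (x 11) (x 12) (x 13);
    quat (x 6) (-x 7) (-x 8) (-x 9), quat (x 10) (-x 11) (-x 12) (-x 13),
      quat (1 / 3 - x 0 - x 1) 0 0 0]

/-- Coordinates of a matrix; inverse to `toMat` on Hermitian matrices of trace `1`. -/
noncomputable def ofMat (M : Matrix (Fin 3) (Fin 3) ℍ[ℝ]) : E14 :=
  !₂[(M 0 0).re - 1 / 3, (M 1 1).re - 1 / 3,
    (M 0 1).re, (M 0 1).imI, (M 0 1).imJ, (M 0 1).imK,
    (M 0 2).re, (M 0 2).imI, (M 0 2).imJ, (M 0 2).imK,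
    (M 1 2).re, (M 1 2).imI, (M 1 2).imJ, (M 1 2).imK]

lemma ofMat_toMat (x : E14) : ofMat (toMat x) = x := by
  ext i
  fin_cases i <;> simp [ofMat, toMat]

lemma qIsHerm_toMat (x : E14) : QIsHerm (toMat x) := by
  intro i j
  fin_cases i <;> fin_cases j <;> ext <;> simp [toMat]

lemma trace_toMat (x : E14) : ∑ i, toMat x i i = 1 := by
  ext <;> simp [Fin.sum_univ_three, toMat]
  ring

lemma toMat_ofMat {M : Matrix (Fin 3) (Fin 3) ℍ[ℝ]} (hM : QIsHerm M)
    (ht : ∑ i, M i i = 1) : toMat (ofMat M) = M := by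
  have hd : ∀ i, (((M i i).re : ℝ) : ℍ[ℝ]) = M i i := fun i =>
    (Quaternion.star_eq_self.mp (hM i i)).symm
  have hI : ∀ i, (M i i).imI = 0 := fun i => by rw [← hd i]; simp
  have hJ : ∀ i, (M i i).imJ = 0 := fun i => by rw [← hd i]; simp
  have hK : ∀ i, (M i i).imK = 0 := fun i => by rw [← hd i]; simp
  have htr : (M 0 0).re + (M 1 1).re + (M 2 2).re = 1 := by
    simpa [Fin.sum_univ_three] using congrArg QuaternionAlgebra.re ht
  ext1 i j
  fin_cases i <;> fin_cases j <;> ext <;>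
    simp [toMat, ofMat, hI, hJ, hK, ← hM 1 0, ← hM 2 0, ← hM 2 1]
  linarith

lemma continuous_toMat : Continuous toMat := by
  refine continuous_matrix fun i j => ?_
  fin_cases i <;> fin_cases j <;>
    exact continuous_quat (by fun_prop) (by fun_prop) (by fun_prop) (by fun_prop)

lemma continuous_ofMat : Continuous ofMat := by
  have h : ∀ i j, Continuous fun M : Matrix (Fin 3) (Fin 3) ℍ[ℝ] => M i j :=
    fun i j => continuous_id.matrix_elem i j
  have hr := fun i j => Quaternion.continuous_re.comp (h i j)
  have hI := fun i j => Quaternion.continuous_imI.comp (h i j)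
  have hJ := fun i j => Quaternion.continuous_imJ.comp (h i j)
  have hK := fun i j => Quaternion.continuous_imK.comp (h i j)
  refine (PiLp.continuous_toLp 2 _).comp (continuous_pi fun k => ?_)
  fin_cases k
  · exact (hr 0 0).sub continuous_const
  · exact (hr 1 1).sub continuous_const
  · exact hr 0 1
  · exact hI 0 1
  · exact hJ 0 1
  · exact hK 0 1
  · exact hr 0 2
  · exact hI 0 2
  · exact hJ 0 2
  · exact hK 0 2
  · exact hr 1 2
  · exact hI 1 2
  · exact hJ 1 2
  · exact hK 1 2

lemma toMat_combo {a b : ℝ} (hab : a + b = 1) (x y : E14) :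
    toMat (a • x + b • y) = a • toMat x + b • toMat y := by
  obtain rfl : b = 1 - a := by linarith
  ext1 i j
  fin_cases i <;> fin_cases j <;> ext <;> simp [toMat] <;> ring

lemma qPosDef_toMat_zero : QPosDef (toMat 0) := by
  intro v hv
  have h : hForm (toMat 0) v = 1 / 3 * ∑ i, Quaternion.normSq (v i) := by
    simp [hForm, toMat, Fin.sum_univ_three, Quaternion.normSq_def']
    ring
  obtain ⟨k, hk⟩ := Function.ne_iff.mp hv
  change 0 < hForm (toMat 0) v
  rw [h]
  refine mul_pos (by norm_num) (Finset.sum_pos' (fun i _ => Quaternion.normSq_nonneg)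
    ⟨k, Finset.mem_univ k, ?_⟩)
  exact Quaternion.normSq_nonneg.lt_of_ne' (Quaternion.normSq_ne_zero.mpr hk)

lemma hForm_toMat_pair (x : E14) (a b c d : ℝ) :
    hForm (toMat x) ![quat 1 0 0 0, quat a b c d, 0] = 1 / 3 + x 0
      + (1 / 3 + x 1) * (a ^ 2 + b ^ 2 + c ^ 2 + d ^ 2)
      + 2 * (a * x 2 - b * x 3 - c * x 4 - d * x 5) := by
  simp [hForm, toMat, Fin.sum_univ_three]
  ring

lemma hForm_toMat_pair' (x : E14) (a b c d : ℝ) :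
    hForm (toMat x) ![quat 1 0 0 0, 0, quat a b c d] = 1 / 3 + x 0
      + (1 / 3 - x 0 - x 1) * (a ^ 2 + b ^ 2 + c ^ 2 + d ^ 2)
      + 2 * (a * x 6 - b * x 7 - c * x 8 - d * x 9) := by
  simp [hForm, toMat, Fin.sum_univ_three]
  ring

lemma hForm_toMat_pair'' (x : E14) (a b c d : ℝ) :
    hForm (toMat x) ![0, quat 1 0 0 0, quat a b c d] = 1 / 3 + x 1
      + (1 / 3 - x 0 - x 1) * (a ^ 2 + b ^ 2 + c ^ 2 + d ^ 2)
      + 2 * (a * x 10 - b * x 11 - c * x 12 - d * x 13) := by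
  simp [hForm, toMat, Fin.sum_univ_three]
  ring

/-- Testing semidefiniteness on `e p + u e q` and `e p - u e q`, with `u` running over the four basis
quaternions, bounds twice each component of the entry `(p, q)` by the sum of two diagonal entries,
which is at most `1`. -/
lemma abs_coord_le {x : E14} (hx : QPosSemidef (toMat x)) (k : Fin 14) : |x k| ≤ 1 := by
  have h1 : ∀ a b c d, (0 : ℝ) ≤ _ := fun a b c d => (hx _).trans_eq (hForm_toMat_pair x a b c d)
  have h2 : ∀ a b c d, (0 : ℝ) ≤ _ := fun a b c d => (hx _).trans_eq (hForm_toMat_pair' x a b c d)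
  have h3 : ∀ a b c d, (0 : ℝ) ≤ _ := fun a b c d => (hx _).trans_eq (hForm_toMat_pair'' x a b c d)
  have d0 := h1 0 0 0 0
  have d1 := h3 0 0 0 0
  have d2 : 0 ≤ 1 / 3 - x 0 - x 1 := by
    have e : hForm (toMat x) ![0, 0, quat 1 0 0 0] = 1 / 3 - x 0 - x 1 := by
      simp [hForm, toMat, Fin.sum_univ_three]
    exact (hx _).trans_eq e
  rw [abs_le]
  fin_cases k <;> simp only [Fin.zero_eta, Fin.mk_one, Fin.reduceFinMk]
  · constructor <;> linarith
  · constructor <;> linarith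
  · have := h1 1 0 0 0; have := h1 (-1) 0 0 0; constructor <;> linarith
  · have := h1 0 1 0 0; have := h1 0 (-1) 0 0; constructor <;> linarith
  · have := h1 0 0 1 0; have := h1 0 0 (-1) 0; constructor <;> linarith
  · have := h1 0 0 0 1; have := h1 0 0 0 (-1); constructor <;> linarith
  · have := h2 1 0 0 0; have := h2 (-1) 0 0 0; constructor <;> linarith
  · have := h2 0 1 0 0; have := h2 0 (-1) 0 0; constructor <;> linarith
  · have := h2 0 0 1 0; have := h2 0 0 (-1) 0; constructor <;> linarith
  · have := h2 0 0 0 1; have := h2 0 0 0 (-1); constructor <;> linarith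
  · have := h3 1 0 0 0; have := h3 (-1) 0 0 0; constructor <;> linarith
  · have := h3 0 1 0 0; have := h3 0 (-1) 0 0; constructor <;> linarith
  · have := h3 0 0 1 0; have := h3 0 0 (-1) 0; constructor <;> linarith
  · have := h3 0 0 0 1; have := h3 0 0 0 (-1); constructor <;> linarith

/-- The positive semidefinite Hermitian matrices of trace `1`, in coordinates. -/
def psdSet : Set E14 := {x | QPosSemidef (toMat x)}

lemma isClosed_psdSet : IsClosed psdSet := by
  have : psdSet = ⋂ v, {x | 0 ≤ hForm (toMat x) v} := by
    ext x
    simp only [psdSet, Set.mem_ofPred_eq, Set.mem_iInter]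
    rfl
  rw [this]
  exact isClosed_iInter fun v => isClosed_le continuous_const
    (continuous_hForm continuous_toMat continuous_const)

lemma convex_psdSet : Convex ℝ psdSet := by
  intro x hx y hy a b ha hb hab v
  change 0 ≤ hForm (toMat (a • x + b • y)) v
  rw [toMat_combo hab, hForm_combo]
  exact add_nonneg (mul_nonneg ha (hx v)) (mul_nonneg hb (hy v))

lemma isBounded_psdSet : Bornology.IsBounded psdSet := by
  refine (Metric.isBounded_closedBall (x := (0 : E14)) (r := √14)).subset fun x hx => ?_
  rw [mem_closedBall_zero_iff, EuclideanSpace.norm_eq]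
  refine Real.sqrt_le_sqrt ?_
  calc ∑ i, ‖x i‖ ^ 2 ≤ ∑ _i : Fin 14, (1 : ℝ) :=
        Finset.sum_le_sum fun i _ => pow_le_one₀ (norm_nonneg _) (abs_coord_le hx i)
    _ = 14 := by simp

/-- If `x` is interior, it can be pushed slightly away from the centre `0` inside `psdSet`; since the
centre is positive definite, `x` is then positive definite too. The converse is openness of
positive definiteness. -/
lemma interior_psdSet : interior psdSet = {x | QPosDef (toMat x)} := by
  apply Set.Subset.antisymm
  · intro x hx v hv
    change 0 < hForm (toMat x) v
    have hc : Filter.Tendsto (fun t : ℝ => (1 + t) • x) (nhds 0) (nhds x) := by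
      have : Continuous fun t : ℝ => (1 + t) • x := by fun_prop
      simpa using this.tendsto 0
    have hev := hc.eventually (mem_interior_iff_mem_nhds.mp hx)
    obtain ⟨ε, hε, hball⟩ := Metric.eventually_nhds_iff.mp hev
    have hmem : (1 + ε / 2) • x ∈ psdSet := hball (by
      rw [Real.dist_eq, sub_zero, abs_of_pos (by linarith)]; linarith)
    have hcomb : (1 + ε / 2) • x = (1 + ε / 2) • x + (-(ε / 2)) • (0 : E14) := by simp
    have h1 : 0 ≤ hForm (toMat ((1 + ε / 2) • x)) v := hmem v
    have h0 : 0 < hForm (toMat 0) v := qPosDef_toMat_zero v hv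
    rw [hcomb, toMat_combo (by ring), hForm_combo] at h1
    have h2 : 0 < (1 + ε / 2) * hForm (toMat x) v := by nlinarith
    exact pos_of_mul_pos_right h2 (by linarith)
  · refine interior_maximal (fun x hx v => ?_) (isOpen_qPosDef.preimage continuous_toMat)
    by_cases hv : v = 0
    · simp [hv]
    · exact (hx v hv).le

lemma mem_frontier_psdSet {x : E14} :
    x ∈ frontier psdSet ↔ QPosSemidef (toMat x) ∧ ¬ QPosDef (toMat x) := by
  rw [isClosed_psdSet.frontier_eq, interior_psdSet]
  rfl

lemma ofMat_mem_frontier {M : Matrix (Fin 3) (Fin 3) ℍ[ℝ]}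
    (hM : QIsHerm M ∧ QPosSemidef M ∧ (∑ i, M i i) = 1 ∧ ¬ QPosDef M) :
    ofMat M ∈ frontier psdSet := by
  rw [mem_frontier_psdSet, toMat_ofMat hM.1 hM.2.2.1]
  exact ⟨hM.2.1, hM.2.2.2⟩

/-- The affine chart identifies the singular positive semidefinite Hermitian matrices of trace `1`
with the frontier of `psdSet`. -/
noncomputable def boundaryHomeo :
    ↥{ M : Matrix (Fin 3) (Fin 3) ℍ[ℝ] |
        QIsHerm M ∧ QPosSemidef M ∧ (∑ i, M i i) = 1 ∧ ¬ QPosDef M } ≃ₜ frontier psdSet where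
  toFun M := ⟨ofMat M.1, ofMat_mem_frontier M.2⟩
  invFun x := ⟨toMat x.1, qIsHerm_toMat _, (mem_frontier_psdSet.mp x.2).1, trace_toMat _,
    (mem_frontier_psdSet.mp x.2).2⟩
  left_inv M := Subtype.ext (toMat_ofMat M.2.1 M.2.2.2.1)
  right_inv x := Subtype.ext (ofMat_toMat x.1)
  continuous_toFun :=
    (continuous_ofMat.comp continuous_subtype_val).subtype_mk fun M => ofMat_mem_frontier M.2
  continuous_invFun := (continuous_toMat.comp continuous_subtype_val).subtype_mk _

/-- Lemma 3 for `n = 2`: the set `Λ₂⁺` of Hermitian positive definite quaternionic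
matrices of trace `1` is convex (over `ℝ`), and its boundary `Σ₂` (Hermitian, positive
semidefinite, trace `1`, not positive definite) is homeomorphic to the 13-sphere. -/
theorem lemma3_n2 :
    Convex ℝ { M : Matrix (Fin 3) (Fin 3) ℍ[ℝ] |
      QIsHerm M ∧ QPosDef M ∧ (∑ i, M i i) = 1 } ∧
    Nonempty
      (↥{ M : Matrix (Fin 3) (Fin 3) ℍ[ℝ] |
            QIsHerm M ∧ QPosSemidef M ∧ (∑ i, M i i) = 1 ∧ ¬ QPosDef M }
        ≃ₜ Metric.sphere (0 : EuclideanSpace ℝ (Fin 14)) 1) := by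
  constructor
  · rintro M ⟨hM, hMp, hMt⟩ N ⟨hN, hNp, hNt⟩ a b ha hb hab
    refine ⟨fun i j => ?_, fun v hv => ?_, ?_⟩
    · simp [← hM i j, ← hN i j]
    · change 0 < hForm (a • M + b • N) v
      rw [hForm_combo]
      have h1 : 0 < hForm M v := hMp v hv
      have h2 : 0 < hForm N v := hNp v hv
      rcases ha.eq_or_lt with rfl | ha'
      · obtain rfl : b = 1 := by linarith
        simpa using h2
      · exact add_pos_of_pos_of_nonneg (mul_pos ha' h1) (mul_nonneg hb h2.le)
    · simp only [Matrix.add_apply, Matrix.smul_apply, Finset.sum_add_distrib, ← Finset.smul_sum,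
        hMt, hNt, ← add_smul, hab, one_smul]
  · have hne : (interior psdSet).Nonempty := by
      rw [interior_psdSet]
      exact ⟨0, qPosDef_toMat_zero⟩
    obtain ⟨e, -, -, he⟩ := exists_homeomorph_image_interior_closure_frontier_eq_unitBall
      convex_psdSet hne isBounded_psdSet
    exact ⟨boundaryHomeo.trans ((e.image _).trans (Homeomorph.setCongr he))⟩
end

section
/- (Lemma 5, case n = 1: SL(3,ℝ) acts transitively on CP² \ RP².) Say that a nonzero vector z ∈ ℂ³ represents a real point if there exist a nonzero complex number c and a vector r ∈ ℝ³ with z = c • (entrywise inclusion of r into ℂ³). Then for any two nonzero vectors z, w ∈ ℂ³ neither of which represents a real point, there exist a matrix A in the special linear group SL(3, ℝ) and a nonzero complex number c such that (the entrywise complexification of A) applied to z equals c • w. -/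
/-!
Writing `z = x + i y` with `x, y ∈ ℝ³`, the point `z` is non-real exactly when `x` and `y` are
linearly independent. In that case `x × y ≠ 0`, and the real matrix with columns `x`, `y` and
`(x × y) / |x × y|²` has determinant `1` and sends the base point `(1, i, 0)` to `z`.
So every non-real point lies in the `SL(3, ℝ)`-orbit of `(1, i, 0)`; no projective rescaling is
needed.
-/

/-- A nonzero vector `z ∈ ℂ³` represents a real point of `CP²` if it is a nonzero
complex multiple of a real vector. -/
def RepresentsRealPoint (z : Fin 3 → ℂ) : Prop :=
  ∃ c : ℂ, c ≠ 0 ∧ ∃ r : Fin 3 → ℝ, z = c • fun i => (r i : ℂ)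

open Matrix in
theorem cross_re_im_ne_zero {z : Fin 3 → ℂ} (hz : ¬ RepresentsRealPoint z) :
    (fun i => (z i).re) ⨯₃ (fun i => (z i).im) ≠ 0 := by
  rw [crossProduct_ne_zero_iff_linearIndependent, LinearIndependent.pair_iff]
  intro a b hab
  by_contra hne
  have hi : ∀ i, a * (z i).re + b * (z i).im = 0 := fun i => congrFun hab i
  apply hz
  -- From `a x + b y = 0` with `(a, b) ≠ 0`, the vector `(b + i a) (x + i y)` has imaginary
  -- part `a x + b y = 0`, so it is real.
  have hc : (⟨b, a⟩ : ℂ) ≠ 0 := by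
    intro h
    exact hne ⟨congrArg Complex.im h, congrArg Complex.re h⟩
  refine ⟨(⟨b, a⟩ : ℂ)⁻¹, inv_ne_zero hc, fun i => b * (z i).re - a * (z i).im, ?_⟩
  funext i
  rw [Pi.smul_apply, smul_eq_mul, eq_inv_mul_iff_mul_eq₀ hc]
  apply Complex.ext
  · simp
  · simp only [Complex.mul_im, Complex.ofReal_im]
    linarith [hi i]

open Matrix in
/-- Every non-real point lies in the `SL(3, ℝ)`-orbit of `(1, i, 0)`. -/
theorem exists_sl3_mulVec_base {z : Fin 3 → ℂ} (hz : ¬ RepresentsRealPoint z) :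
    ∃ A : Matrix.SpecialLinearGroup (Fin 3) ℝ,
      ((A : Matrix (Fin 3) (Fin 3) ℝ).map Complex.ofReal).mulVec ![1, Complex.I, 0] = z := by
  have hn := cross_re_im_ne_zero hz
  set x : Fin 3 → ℝ := fun i => (z i).re with hx
  set y : Fin 3 → ℝ := fun i => (z i).im with hy
  set n := x ⨯₃ y with hn'
  have hnn : n ⬝ᵥ n ≠ 0 := fun h => hn (dotProduct_self_eq_zero.1 h)
  refine ⟨⟨(Matrix.of ![x, y, (n ⬝ᵥ n)⁻¹ • n])ᵀ, ?_⟩, ?_⟩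
  · rw [det_transpose]
    change Matrix.det ![x, y, (n ⬝ᵥ n)⁻¹ • n] = 1
    rw [← triple_product_eq_det, triple_product_permutation, triple_product_permutation,
      ← hn', smul_dotProduct, smul_eq_mul, inv_mul_cancel₀ hnn]
  · funext i
    simp only [mulVec, dotProduct, Fin.sum_univ_three]
    simp [hx, hy, Complex.re_add_im]

/-- Lemma 5 for `n = 1`: `SL(3,ℝ)` acts transitively on `CP² \ RP²`. -/
theorem sl3r_transitive_on_cp2_minus_rp2
    (z w : Fin 3 → ℂ) (hz : z ≠ 0) (hw : w ≠ 0)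
    (hz' : ¬ RepresentsRealPoint z) (hw' : ¬ RepresentsRealPoint w) :
    ∃ A : Matrix.SpecialLinearGroup (Fin 3) ℝ, ∃ c : ℂ, c ≠ 0 ∧
      ((A : Matrix (Fin 3) (Fin 3) ℝ).map Complex.ofReal).mulVec z = c • w := by
  obtain ⟨P, hP⟩ := exists_sl3_mulVec_base hz'
  obtain ⟨Q, hQ⟩ := exists_sl3_mulVec_base hw'
  have hmul : ∀ A B : Matrix (Fin 3) (Fin 3) ℝ,
      A.map Complex.ofReal * B.map Complex.ofReal = (A * B).map Complex.ofReal :=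
    fun A B => (Matrix.map_mul (f := Complex.ofRealHom)).symm
  refine ⟨Q * P⁻¹, 1, one_ne_zero, ?_⟩
  rw [one_smul, ← hP, Matrix.mulVec_mulVec, hmul, ← Matrix.SpecialLinearGroup.coe_mul,
    inv_mul_cancel_right, hQ]
end

section
/- (Lemma 5, case n = 2: SL(3,ℂ) acts transitively on HP² \ CP².) Say that a nonzero vector x ∈ ℍ³ represents a complex point if there exist a vector z ∈ ℂ³ and a nonzero quaternion a such that x i = (z i : ℍ) * a for all i. Then for any two nonzero vectors x, y ∈ ℍ³ neither of which represents a complex point, there exist a matrix A in the special linear group SL(3, ℂ) and a nonzero quaternion a such that ∑ⱼ ((A i j : ℍ) * x j) = (y i) * a for all i. -/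
/-!
Writing `ℍ = ℂ ⊕ ℂ j`, a vector `x ∈ ℍ³` is `u + v j` for a unique pair `u, v ∈ ℂ³`, and a complex
matrix acts on `x` by acting on `u` and `v` separately. If `u` and `v` are linearly dependent, both
are multiples of one complex vector, so `x` represents a complex point
(`linearIndependent_of_not_representsComplexPoint`). Hence points off `CP²` correspond to linearly
independent pairs. Such a pair occurs as two columns of a matrix of determinant `1`
(`exists_specialLinearGroup_mulVec_single`), because `u × v ≠ 0` allows a third column `w` with
`w ⬝ (u × v) = 1`. So `SL(3, ℂ)` is transitive on independent pairs, and `x` is even carried to `y`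
exactly, with the scalar `a = 1`.
-/

open scoped Quaternion

/-- A nonzero vector `x ∈ ℍ³` represents a complex point of `HP²` if it is a right
quaternionic multiple of a complex vector. -/
def RepresentsComplexPoint (x : Fin 3 → ℍ[ℝ]) : Prop :=
  ∃ z : Fin 3 → ℂ, ∃ a : ℍ[ℝ], a ≠ 0 ∧ ∀ i, x i = (z i).toQuat * a

@[simp] theorem re_toQuat (z : ℂ) : z.toQuat.re = z.re := rfl

@[simp] theorem imI_toQuat (z : ℂ) : z.toQuat.imI = z.im := rfl

@[simp] theorem imJ_toQuat (z : ℂ) : z.toQuat.imJ = 0 := rfl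

@[simp] theorem imK_toQuat (z : ℂ) : z.toQuat.imK = 0 := rfl

/-- The vector `u` in the decomposition `x = u + v j` with `u, v ∈ ℂ³`. -/
def quatFst (x : Fin 3 → ℍ[ℝ]) : Fin 3 → ℂ := fun i => ⟨(x i).re, (x i).imI⟩

/-- The vector `v` in the decomposition `x = u + v j` with `u, v ∈ ℂ³`; recall `i j = k`. -/
def quatSnd (x : Fin 3 → ℍ[ℝ]) : Fin 3 → ℂ := fun i => ⟨(x i).imJ, (x i).imK⟩

theorem linearIndependent_of_not_representsComplexPoint (x : Fin 3 → ℍ[ℝ])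
    (hx : ¬ RepresentsComplexPoint x) : LinearIndependent ℂ ![quatFst x, quatSnd x] := by
  rw [LinearIndependent.pair_iff]
  by_contra! h
  obtain ⟨s, t, hst, hne⟩ := h
  apply hx
  by_cases hs : s = 0
  · -- Here `v = 0`, so `x = u` is itself a complex vector.
    have ht := hne hs
    have hv : quatSnd x = 0 := by simpa [hs, ht] using hst
    refine ⟨quatFst x, 1, one_ne_zero, fun i => ?_⟩
    have hi := congrFun hv i
    simp only [quatSnd, Pi.zero_apply, Complex.ext_iff, Complex.zero_re, Complex.zero_im] at hi
    ext <;> simp [quatFst, hi.1, hi.2]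
  · -- Here `u = c v`, so `x = v (c + j)`.
    obtain ⟨c, hc⟩ : ∃ c : ℂ, quatFst x = c • quatSnd x := by
      refine ⟨-(t / s), ?_⟩
      ext i
      have hi := congrFun hst i
      simp only [Pi.add_apply, Pi.smul_apply, smul_eq_mul, Pi.zero_apply] at hi ⊢
      field_simp
      linear_combination hi
    obtain ⟨q, hq₀, hq₁, hq₂, hq₃⟩ :
        ∃ q : ℍ[ℝ], q.re = c.re ∧ q.imI = c.im ∧ q.imJ = 1 ∧ q.imK = 0 :=
      ⟨⟨c.re, c.im, 1, 0⟩, rfl, rfl, rfl, rfl⟩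
    refine ⟨quatSnd x, q, fun h => ?_, fun i => ?_⟩
    · simp [h] at hq₂
    · have hi := congrFun hc i
      simp only [quatFst, quatSnd, Pi.smul_apply, smul_eq_mul, Complex.ext_iff, Complex.mul_re,
        Complex.mul_im] at hi
      ext <;> simp [quatSnd, hq₀, hq₁, hq₂, hq₃] <;> linarith [hi.1, hi.2]

/-- A linearly independent pair in `ℂ³` extends to the columns of a matrix of determinant `1`. -/
theorem exists_specialLinearGroup_mulVec_single (u v : Fin 3 → ℂ)
    (h : LinearIndependent ℂ ![u, v]) :
    ∃ M : Matrix.SpecialLinearGroup (Fin 3) ℂ,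
      (M : Matrix (Fin 3) (Fin 3) ℂ).mulVec (Pi.single 1 1) = u ∧
      (M : Matrix (Fin 3) (Fin 3) ℂ).mulVec (Pi.single 2 1) = v := by
  have hne := crossProduct_ne_zero_iff_linearIndependent.mpr h
  obtain ⟨i, hi⟩ := Function.ne_iff.mp hne
  let w : Fin 3 → ℂ := Pi.single i (crossProduct u v i)⁻¹
  have hdet : (Matrix.of ![w, u, v]).transpose.det = 1 := by
    rw [Matrix.det_transpose]
    refine (triple_product_eq_det w u v).symm.trans ?_
    simpa [w] using inv_mul_cancel₀ hi
  refine ⟨⟨_, hdet⟩, ?_, ?_⟩ <;> ext k <;> simp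

/-- A complex matrix acts on `u + v j` through its action on `u` and on `v`. -/
theorem sum_toQuat_mul_eq (A : Matrix (Fin 3) (Fin 3) ℂ) (x y : Fin 3 → ℍ[ℝ])
    (h₁ : A.mulVec (quatFst x) = quatFst y) (h₂ : A.mulVec (quatSnd x) = quatSnd y) (i : Fin 3) :
    ∑ j, (A i j).toQuat * x j = y i := by
  have e₁ := congrFun h₁ i
  have e₂ := congrFun h₂ i
  simp only [Matrix.mulVec, dotProduct, Fin.sum_univ_three, quatFst, quatSnd, Complex.ext_iff,
    Complex.add_re, Complex.add_im, Complex.mul_re, Complex.mul_im] at e₁ e₂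
  ext <;> simp [Fin.sum_univ_three] <;> linarith [e₁.1, e₁.2, e₂.1, e₂.2]

/-- Lemma 5 for `n = 2`: `SL(3,ℂ)` acts transitively on `HP² \ CP²`. -/
theorem sl3c_transitive_on_hp2_minus_cp2
    (x y : Fin 3 → ℍ[ℝ]) (hx : x ≠ 0) (hy : y ≠ 0)
    (hx' : ¬ RepresentsComplexPoint x) (hy' : ¬ RepresentsComplexPoint y) :
    ∃ A : Matrix.SpecialLinearGroup (Fin 3) ℂ, ∃ a : ℍ[ℝ], a ≠ 0 ∧
      ∀ i, (∑ j, ((A : Matrix (Fin 3) (Fin 3) ℂ) i j).toQuat * x j) = y i * a := by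
  obtain ⟨M, hM₁, hM₂⟩ := exists_specialLinearGroup_mulVec_single _ _
    (linearIndependent_of_not_representsComplexPoint x hx')
  obtain ⟨N, hN₁, hN₂⟩ := exists_specialLinearGroup_mulVec_single _ _
    (linearIndependent_of_not_representsComplexPoint y hy')
  have hNM : ((N * M⁻¹ : Matrix.SpecialLinearGroup (Fin 3) ℂ) : Matrix (Fin 3) (Fin 3) ℂ) *
      (M : Matrix (Fin 3) (Fin 3) ℂ) = N := by
    rw [← Matrix.SpecialLinearGroup.coe_mul, inv_mul_cancel_right]
  refine ⟨N * M⁻¹, 1, one_ne_zero, fun i => ?_⟩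
  rw [mul_one]
  apply sum_toQuat_mul_eq
  · rw [← hM₁, Matrix.mulVec_mulVec, hNM, hN₁]
  · rw [← hM₂, Matrix.mulVec_mulVec, hNM, hN₂]
end

section
/- (Preliminary step for Theorem A: projection of CP¹ onto the disc.) For unit vectors x ∈ ℂ² (∑ᵢ ‖x i‖² = 1), let X(x) be the 2×2 complex matrix with entries X(x) i j = x i * conj(x j). Then: (1) the set { Re(X(x)) : x ∈ ℂ², ∑ᵢ ‖x i‖² = 1 } is exactly the set of 2×2 real symmetric positive semidefinite matrices of trace 1 (a closed disc); (2) for unit vectors x, y ∈ ℂ², Re(X(x)) = Re(X(y)) if and only if X(y) = X(x) or X(y) equals the entrywise complex conjugate of X(x). -/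
/-!
A Hermitian rank-one matrix `X(x)` has real part `u uᵀ + v vᵀ`, where `x = u + i v`; this is positive
semidefinite, with trace `‖x‖²`. Conversely a real positive semidefinite `S = !![p, q; q, r]` has
`p, r ≥ 0` and `q² ≤ p r`; if `p > 0`, the vector `(√p, (q + i √(p r - q²)) / √p)` realises it, and if
`p = 0` then `q = 0` and `(0, √r)` does.

For the fibres, `X(x)` is Hermitian with vanishing determinant, so `re (X₀₁)² + im (X₀₁)² = X₀₀ X₁₁` with
real diagonal entries. The real part therefore determines `X` up to the sign of `im X₀₁`, and flipping
that sign is entrywise complex conjugation.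
-/

/-- For a unit vector `x ∈ ℂ²`, the `2 × 2` matrix `X(x) i j = x i * conj (x j)`. -/
def Xmat (x : Fin 2 → ℂ) : Matrix (Fin 2) (Fin 2) ℂ :=
  Matrix.of fun i j => x i * starRingEnd ℂ (x j)

theorem posSemidef_re_Xmat (x : Fin 2 → ℂ) : ((Xmat x).map Complex.re).PosSemidef := by
  refine .of_dotProduct_mulVec_nonneg ?_ fun v => ?_
  · ext i j
    simp [Xmat]
    ring
  · have h : star v ⬝ᵥ ((Xmat x).map Complex.re).mulVec v =
        (v 0 * (x 0).re + v 1 * (x 1).re) ^ 2 + (v 0 * (x 0).im + v 1 * (x 1).im) ^ 2 := by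
      simp [Xmat, Matrix.mulVec, dotProduct, Fin.sum_univ_two]
      ring
    rw [h]
    positivity

theorem trace_re_Xmat (x : Fin 2 → ℂ) :
    ((Xmat x).map Complex.re).trace = ∑ i, ‖x i‖ ^ 2 := by
  simp [Xmat, Matrix.trace, Fin.sum_univ_two, Complex.sq_norm, Complex.normSq_apply]

/-- Every real positive semidefinite `2 × 2` matrix is the real part of some `X(x)`; the trace
then fixes the norm of `x`. -/
theorem exists_re_Xmat_eq {S : Matrix (Fin 2) (Fin 2) ℝ} (hS : S.PosSemidef) :
    ∃ x : Fin 2 → ℂ, S = (Xmat x).map Complex.re := by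
  have hp : 0 ≤ S 0 0 := hS.diag_nonneg
  have hr : 0 ≤ S 1 1 := hS.diag_nonneg
  have hq : S 1 0 = S 0 1 := by simpa using hS.1.apply 0 1
  have hd : 0 ≤ S 0 0 * S 1 1 - S 0 1 * S 0 1 := by
    have := hS.det_nonneg
    rwa [Matrix.det_fin_two, hq] at this
  rcases hp.eq_or_lt with h0 | h0
  · have hq0 : S 0 1 = 0 := by
      rw [← h0] at hd
      nlinarith
    refine ⟨![0, (√(S 1 1) : ℝ)], ?_⟩
    ext i j
    fin_cases i <;> fin_cases j <;> simp [Xmat, hq, hq0, ← h0, hr]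
  · refine ⟨![(√(S 0 0) : ℝ),
      ⟨S 0 1 / √(S 0 0), √(S 0 0 * S 1 1 - S 0 1 * S 0 1) / √(S 0 0)⟩], ?_⟩
    have hs : √(S 0 0) ≠ 0 := (Real.sqrt_pos.2 h0).ne'
    ext i j
    fin_cases i <;> fin_cases j <;> simp [Xmat, hq, hp]
    · field_simp
    · field_simp
    · rw [div_mul_div_comm, div_mul_div_comm, Real.mul_self_sqrt hp, Real.mul_self_sqrt hd]
      field_simp
      ring

/-- `X(x)` has determinant zero, hence the off-diagonal entry satisfies
`re² + im² = X₀₀ X₁₁`. -/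
theorem Xmat_im_sq (x : Fin 2 → ℂ) :
    (Xmat x 0 1).im ^ 2 = (Xmat x 0 0).re * (Xmat x 1 1).re - (Xmat x 0 1).re ^ 2 := by
  simp [Xmat]
  ring

theorem Xmat_diag_im (x : Fin 2 → ℂ) (i : Fin 2) : (Xmat x i i).im = 0 := by
  simp [Xmat]
  ring

theorem Xmat_one_zero (x : Fin 2 → ℂ) : Xmat x 1 0 = starRingEnd ℂ (Xmat x 0 1) := by
  simp [Xmat, mul_comm]

theorem re_Xmat_eq_iff (x y : Fin 2 → ℂ) :
    (Xmat x).map Complex.re = (Xmat y).map Complex.re ↔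
      (Xmat y = Xmat x ∨ Xmat y = (Xmat x).map (starRingEnd ℂ)) := by
  constructor
  · intro h
    have hre : ∀ i j, (Xmat y i j).re = (Xmat x i j).re := fun i j => (congrFun₂ h i j).symm
    have him : (Xmat y 0 1).im ^ 2 = (Xmat x 0 1).im ^ 2 := by
      rw [Xmat_im_sq, Xmat_im_sq, hre, hre, hre]
    refine (sq_eq_sq_iff_eq_or_eq_neg.1 him).imp (fun h1 => ?_) fun h1 => ?_
    all_goals
      ext i j
      apply Complex.ext
      · simpa using hre i j
      · fin_cases i <;> fin_cases j <;> simp [Xmat_diag_im, Xmat_one_zero, h1]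
  · rintro (h | h) <;> rw [h]
    ext i j
    simp

/-- Projection of `CP¹` onto the disc: (1) the entrywise real parts of the rank-one
projections `X(x)` are exactly the real symmetric positive semidefinite matrices of
trace `1`; (2) two of them have the same real part iff the matrices agree or are
entrywise complex conjugate. -/
theorem cp1_projection_to_disc :
    ({ S : Matrix (Fin 2) (Fin 2) ℝ | ∃ x : Fin 2 → ℂ,
        (∑ i, ‖x i‖ ^ 2) = 1 ∧ S = (Xmat x).map Complex.re }
      = { S : Matrix (Fin 2) (Fin 2) ℝ | S.PosSemidef ∧ S.trace = 1 }) ∧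
    (∀ x y : Fin 2 → ℂ, (∑ i, ‖x i‖ ^ 2) = 1 → (∑ i, ‖y i‖ ^ 2) = 1 →
      ((Xmat x).map Complex.re = (Xmat y).map Complex.re ↔
        (Xmat y = Xmat x ∨ Xmat y = (Xmat x).map (starRingEnd ℂ)))) := by
  refine ⟨?_, fun x y _ _ => re_Xmat_eq_iff x y⟩
  ext S
  constructor
  · rintro ⟨x, hx, rfl⟩
    exact ⟨posSemidef_re_Xmat x, (trace_re_Xmat x).trans hx⟩
  · rintro ⟨hS, ht⟩
    obtain ⟨x, rfl⟩ := exists_re_Xmat_eq hS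
    exact ⟨x, (trace_re_Xmat x).symm.trans ht, rfl⟩
end

section
/- (Transitivity of SO(3) on the conic, the second special orbit in CP².) For any two nonzero vectors z, w ∈ ℂ³ satisfying z₁² + z₂² + z₃² = 0 and w₁² + w₂² + w₃² = 0, there exist a matrix A in the special orthogonal group SO(3) and a nonzero complex number c such that (the entrywise complexification of A) applied to z equals c • w. -/
open Matrix

/-!
Writing a nonzero `z` on the conic as `x + iy` with `x, y` real, the equation `∑ zᵢ² = 0` says that
`x` and `y` are orthogonal of equal length `t > 0`. Hence `(x/t, y/t, x/t × y/t)` is a positively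
oriented orthonormal frame, and the rotation with these rows carries `z` to `t • (1, i, 0)`
(`exists_rotation_to_base`). All points of the conic thus lie in the orbit of `[1 : i : 0]`; the
rotation for `z` followed by the inverse (that is, the transpose) of the one for `w` carries `[z]`
to `[w]`.
-/

/-- The matrix with rows `u`, `v`, `u × v`, for `u`, `v` orthonormal, is a rotation. -/
lemma frame_mem_SO (u v : Fin 3 → ℝ) (hu : u ⬝ᵥ u = 1) (hv : v ⬝ᵥ v = 1) (huv : u ⬝ᵥ v = 0) :
    (of ![u, v, u ⨯₃ v]) * (of ![u, v, u ⨯₃ v])ᵀ = 1 ∧ (of ![u, v, u ⨯₃ v]).det = 1 := by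
  have hvu : v ⬝ᵥ u = 0 := by rw [dotProduct_comm, huv]
  have hc : (u ⨯₃ v) ⬝ᵥ (u ⨯₃ v) = 1 := by rw [cross_dot_cross, hu, hv, huv, hvu]; norm_num
  have h1 := dot_self_cross u v
  have h2 := dot_cross_self u v
  have h3 : (u ⨯₃ v) ⬝ᵥ u = 0 := by rw [dotProduct_comm, h1]
  have h4 : (u ⨯₃ v) ⬝ᵥ v = 0 := by rw [dotProduct_comm, h2]
  refine ⟨?_, ?_⟩
  · ext i j
    change (![u, v, u ⨯₃ v] i) ⬝ᵥ (![u, v, u ⨯₃ v] j) = _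
    fin_cases i <;> fin_cases j <;> simp [hu, hv, huv, hvu, hc, h1, h2, h3, h4]
  · change Matrix.det ![u, v, u ⨯₃ v] = 1
    rw [← triple_product_eq_det, triple_product_permutation, triple_product_permutation, hc]

lemma exists_rotation_to_base (z : Fin 3 → ℂ) (hz : z ≠ 0) (hz' : (∑ i, (z i) ^ 2) = 0) :
    ∃ M : Matrix (Fin 3) (Fin 3) ℝ, M * Mᵀ = 1 ∧ M.det = 1 ∧
      ∃ t : ℂ, t ≠ 0 ∧ (M.map Complex.ofReal).mulVec z = t • ![1, Complex.I, 0] := by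
  set x : Fin 3 → ℝ := fun i => (z i).re with hx
  set y : Fin 3 → ℝ := fun i => (z i).im with hy
  have hzxy : ∀ i, z i = x i + y i * Complex.I := fun i => (Complex.re_add_im (z i)).symm
  have hre := congrArg Complex.re hz'
  have him := congrArg Complex.im hz'
  simp only [Fin.sum_univ_three, pow_two, Complex.add_re, Complex.mul_re, Complex.add_im,
    Complex.mul_im, Complex.zero_re, Complex.zero_im] at hre him
  have hxx : x ⬝ᵥ x = y ⬝ᵥ y := by simp only [dotProduct, Fin.sum_univ_three, hx, hy]; linarith
  have hxy : x ⬝ᵥ y = 0 := by simp only [dotProduct, Fin.sum_univ_three, hx, hy]; linarith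
  have hne : x ⬝ᵥ x ≠ 0 := by
    intro h
    have h0 : x = 0 := dotProduct_self_eq_zero.1 h
    have h1 : y = 0 := dotProduct_self_eq_zero.1 (hxx ▸ h)
    apply hz
    ext i
    simp [hzxy i, h0, h1]
  have hnn : 0 ≤ x ⬝ᵥ x := by
    simp only [dotProduct, Fin.sum_univ_three]; nlinarith [sq_nonneg (x 0), sq_nonneg (x 1), sq_nonneg (x 2)]
  obtain ⟨t, ht⟩ : ∃ t : ℝ, x ⬝ᵥ x = t * t := ⟨_, (Real.mul_self_sqrt hnn).symm⟩
  have ht0 : t ≠ 0 := by rintro rfl; exact hne (by simpa using ht)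
  have hu : (t⁻¹ • x) ⬝ᵥ (t⁻¹ • x) = 1 := by
    simp only [smul_dotProduct, dotProduct_smul, ht, smul_eq_mul]; field_simp
  have hv : (t⁻¹ • y) ⬝ᵥ (t⁻¹ • y) = 1 := by
    simp only [smul_dotProduct, dotProduct_smul, ← hxx, ht, smul_eq_mul]; field_simp
  have huv : (t⁻¹ • x) ⬝ᵥ (t⁻¹ • y) = 0 := by
    simp [smul_dotProduct, dotProduct_smul, hxy]
  obtain ⟨hM, hdet⟩ := frame_mem_SO _ _ hu hv huv
  refine ⟨_, hM, hdet, t, by exact_mod_cast ht0, ?_⟩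
  generalize hu' : t⁻¹ • x = u at *
  generalize hv' : t⁻¹ • y = v at *
  have hxu : x = t • u := by rw [← hu', smul_inv_smul₀ ht0]
  have hyv : y = t • v := by rw [← hv', smul_inv_smul₀ ht0]
  have key : ∀ r : Fin 3 → ℝ, (∑ j, (r j : ℂ) * z j)
      = t * (((r ⬝ᵥ u : ℝ) : ℂ) + ((r ⬝ᵥ v : ℝ) : ℂ) * Complex.I) := by
    intro r
    simp only [hzxy, hxu, hyv, dotProduct, Fin.sum_univ_three, Pi.smul_apply, smul_eq_mul]
    push_cast
    ring
  have hvu : v ⬝ᵥ u = 0 := by rw [dotProduct_comm, huv]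
  have h3 : (u ⨯₃ v) ⬝ᵥ u = 0 := by rw [dotProduct_comm, dot_self_cross]
  have h4 : (u ⨯₃ v) ⬝ᵥ v = 0 := by rw [dotProduct_comm, dot_cross_self]
  ext i
  change (∑ j, ((![u, v, u ⨯₃ v] i j : ℝ) : ℂ) * z j) = _
  rw [key]
  fin_cases i <;> simp [hu, hv, huv, hvu, h3, h4]

/-- Transitivity of `SO(3)` on the conic `{z₁² + z₂² + z₃² = 0} ⊂ CP²`. -/
theorem so3_transitive_on_conic
    (z w : Fin 3 → ℂ) (hz : z ≠ 0) (hw : w ≠ 0)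
    (hz' : (∑ i, (z i) ^ 2) = 0) (hw' : (∑ i, (w i) ^ 2) = 0) :
    ∃ A : Matrix (Fin 3) (Fin 3) ℝ, A * Aᵀ = 1 ∧ A.det = 1 ∧
      ∃ c : ℂ, c ≠ 0 ∧ (A.map Complex.ofReal).mulVec z = c • w := by
  obtain ⟨M, hM, hMd, s, hs, hMz⟩ := exists_rotation_to_base z hz hz'
  obtain ⟨N, hN, hNd, t, ht, hNw⟩ := exists_rotation_to_base w hw hw'
  have hN' : Nᵀ * N = 1 := mul_eq_one_comm.1 hN
  have hmap : ∀ P Q : Matrix (Fin 3) (Fin 3) ℝ,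
      (P * Q).map Complex.ofReal = P.map Complex.ofReal * Q.map Complex.ofReal :=
    fun P Q => Matrix.map_mul (f := Complex.ofRealHom)
  have hw1 : w = t • (Nᵀ.map Complex.ofReal).mulVec ![1, Complex.I, 0] := by
    rw [← mulVec_smul, ← hNw, mulVec_mulVec, ← hmap, hN',
      Matrix.map_one _ Complex.ofReal_zero Complex.ofReal_one, one_mulVec]
  refine ⟨Nᵀ * M, ?_, by rw [det_mul, det_transpose, hMd, hNd, one_mul], s / t, div_ne_zero hs ht, ?_⟩
  · rw [transpose_mul, transpose_transpose, Matrix.mul_assoc, ← Matrix.mul_assoc M, hM,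
      Matrix.one_mul, hN']
  · rw [hmap, ← mulVec_mulVec, hMz, mulVec_smul, hw1, smul_smul, div_mul_cancel₀ _ ht]
end

section
/- (Equation CP²(j) ∩ CP² = RP² inside HP².) Let ℂ_j = { s + t·j : s, t ∈ ℝ } ⊂ ℍ. Suppose a nonzero vector x ∈ ℍ³ satisfies both: (a) there exist z ∈ ℂ³ and a nonzero quaternion a with x i = (z i : ℍ) * a for all i, and (b) there exist w : Fin 3 → ℂ_j and a nonzero quaternion b with x i = (w i) * b for all i. Then there exist r ∈ ℝ³ and a nonzero quaternion q with x i = (r i : ℍ) * q for all i. In other words, a point of HP² lying both on the standard CP² and on the copy CP²(j) obtained from the embedding ℂ → ℍ sending i to j lies on RP². -/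
/-!
Scaling on the right does not change the left ratios `x i * (x m)⁻¹`. Fix `m` with `x m ≠ 0`.
The first representative shows that these ratios lie in the field `ℂ`, the second that they lie in
the field `ℂ_j`, so they lie in `ℂ ∩ ℂ_j = ℝ`. Hence `x i` is a real multiple of `q = x m`.
-/

open scoped Quaternion

/-- A quaternion lies in `ℂ_j = span{1, j}` iff its `i`- and `k`-parts vanish. -/
def InCj (q : ℍ[ℝ]) : Prop := q.imI = 0 ∧ q.imK = 0

lemma InCj.mul_inv {u v : ℍ[ℝ]} (hu : InCj u) (hv : InCj v) : InCj (u * v⁻¹) := by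
  obtain ⟨hu1, hu2⟩ := hu
  obtain ⟨hv1, hv2⟩ := hv
  constructor <;> simp [Quaternion.inv_def, hu1, hu2, hv1, hv2]

lemma Complex.imJ_toQuat_mul_inv (u v : ℂ) : (u.toQuat * v.toQuat⁻¹).imJ = 0 := by
  have hJ (z : ℂ) : z.toQuat.imJ = 0 := rfl
  have hK (z : ℂ) : z.toQuat.imK = 0 := rfl
  simp [Quaternion.inv_def, hJ, hK]

/-- Left ratios of coordinates are unchanged when both coordinates are multiplied on the right
by the same nonzero scalar. -/
lemma mul_mul_inv_mul_right {D : Type*} [DivisionRing D] {a : D} (ha : a ≠ 0) (u v : D) :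
    u * a * (v * a)⁻¹ = u * v⁻¹ := by
  rw [mul_inv_rev, mul_assoc, mul_inv_cancel_left₀ ha]

theorem cp2j_inter_cp2_eq_rp2
    (x : Fin 3 → ℍ[ℝ]) (hx : x ≠ 0)
    (ha : ∃ z : Fin 3 → ℂ, ∃ a : ℍ[ℝ], a ≠ 0 ∧ ∀ i, x i = (z i).toQuat * a)
    (hb : ∃ w : Fin 3 → ℍ[ℝ], (∀ i, InCj (w i)) ∧
      ∃ b : ℍ[ℝ], b ≠ 0 ∧ ∀ i, x i = w i * b) :
    ∃ r : Fin 3 → ℝ, ∃ q : ℍ[ℝ], q ≠ 0 ∧ ∀ i, x i = (r i : ℍ[ℝ]) * q := by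
  obtain ⟨z, a, ha0, hza⟩ := ha
  obtain ⟨w, hw, b, hb0, hwb⟩ := hb
  obtain ⟨m, hm⟩ : ∃ m, x m ≠ 0 := Function.ne_iff.mp hx
  refine ⟨fun i => (x i * (x m)⁻¹).re, x m, hm, fun i => ?_⟩
  have hJ : (x i * (x m)⁻¹).imJ = 0 := by
    rw [hza i, hza m, mul_mul_inv_mul_right ha0]
    exact Complex.imJ_toQuat_mul_inv _ _
  have hIK : InCj (x i * (x m)⁻¹) := by
    rw [hwb i, hwb m, mul_mul_inv_mul_right hb0]
    exact (hw i).mul_inv (hw m)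
  have hreal : (((x i * (x m)⁻¹).re : ℝ) : ℍ[ℝ]) = x i * (x m)⁻¹ := by
    ext
    · exact Quaternion.re_coe _
    · exact (Quaternion.imI_coe _).trans hIK.1.symm
    · exact (Quaternion.imJ_coe _).trans hJ.symm
    · exact (Quaternion.imK_coe _).trans hIK.2.symm
  rw [hreal, inv_mul_cancel_right₀ hm]
end
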